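/- arXiv:2510.04417 — 2 statements merged into one kernel-verified Lean document; each statement's English description precedes it below -/
import Mathlib

section
/- Mutual information of a Gaussian linear channel: let Y ~ N(0, Σ_Y) on ℝ^{d_Y} with Σ_Y positive definite, let n ~ N(0, Σ_n) on ℝ^d with Σ_n positive definite, independent of Y, let H be a real d × d_Y matrix, and set X = H Y + n. Then I(X; Y) = (1/2) · log( det(H Σ_Y Hᵀ + Σ_n) / det Σ_n ). -/
/-!
Write `g_S` for the density of `N(0, S)` and `T = H Σ_Y Hᵀ + Σ_n`. The law of `(X, Y)` has Lebesgue
density `g_{Σ_Y}(y) g_{Σ_n}(x - H y)` (`map_channel_joint`), and `X ~ N(0, T)` (`map_channel_eq`),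
so the density of the joint law with respect to the product of its marginals is
`g_{Σ_n}(x - H y) / g_T(x)`. Its logarithm, evaluated at `(X, Y)`, is
`(1/2) log (det T / det Σ_n) - (1/2) nᵀ Σ_n⁻¹ n + (1/2) Xᵀ T⁻¹ X`.
The two quadratic forms are integrable with the same expectation `d` (`mvGaussian_quad`), so only
the constant survives in the mean.

The law of `X` and the expectation of the quadratic forms are read off from Mathlib's
`multivariateGaussian`, with which the density-defined `mvGaussian` is identified in
`mvGaussian_eq_map_multivariateGaussian`.
-/

open MeasureTheory Matrix

open Classical in
/-- Kullback–Leibler divergence `KL(P ‖ Q)`, valued in `EReal`. -/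
noncomputable def klDiv {α : Type*} [MeasurableSpace α] (P Q : Measure α) : EReal :=
  if P ≪ Q ∧ Integrable (fun x => Real.log (P.rnDeriv Q x).toReal) P
  then ((∫ x, Real.log (P.rnDeriv Q x).toReal ∂P : ℝ) : EReal)
  else ⊤

/-- Mutual information of a measure on a product space: `I(P) := KL(P ‖ P₁ ⊗ P₂)`. -/
noncomputable def mutualInfo {α β : Type*} [MeasurableSpace α] [MeasurableSpace β]
    (P : Measure (α × β)) : EReal :=
  klDiv P ((P.map Prod.fst).prod (P.map Prod.snd))

/-- Mutual information `I(X; Y)` of two random variables: `KL(law (X,Y) ‖ law X ⊗ law Y)`. -/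
noncomputable def miRV {Ω α β : Type*} [MeasurableSpace Ω] [MeasurableSpace α]
    [MeasurableSpace β] (P : Measure Ω) (X : Ω → α) (Y : Ω → β) : EReal :=
  mutualInfo (P.map fun ω => (X ω, Y ω))

/-- The multivariate Gaussian measure `N(m, S)` on `ι → ℝ`, defined by its density
with respect to Lebesgue measure. -/
noncomputable def mvGaussian {ι : Type*} [Fintype ι] [DecidableEq ι]
    (m : ι → ℝ) (S : Matrix ι ι ℝ) : Measure (ι → ℝ) :=
  volume.withDensity fun x =>
    ENNReal.ofReal ((Real.sqrt ((2 * Real.pi) ^ (Fintype.card ι) * S.det))⁻¹ *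
      Real.exp (-(1/2) * ((x - m) ⬝ᵥ (S⁻¹ *ᵥ (x - m)))))

section GaussianChannel

open ProbabilityTheory WithLp

lemma map_withDensity_comp {α β : Type*} [MeasurableSpace α] [MeasurableSpace β]
    (μ : Measure α) {e : α → β} (he : Measurable e) {g : β → ENNReal} (hg : Measurable g) :
    (μ.withDensity (g ∘ e)).map e = (μ.map e).withDensity g := by
  ext s hs
  rw [Measure.map_apply he hs, withDensity_apply _ (he hs), withDensity_apply _ hs,
    setLIntegral_map hs hg he]
  rfl

/-! ### Gaussian measures given by their density -/

/-- The Lebesgue density of `N(0, S)`, as a real-valued function; it is the Gaussian density only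
for positive definite `S`. -/
noncomputable def gaussDensity {ι : Type*} [Fintype ι] [DecidableEq ι] (S : Matrix ι ι ℝ)
    (x : ι → ℝ) : ℝ :=
  (Real.sqrt ((2 * Real.pi) ^ (Fintype.card ι) * S.det))⁻¹ *
      Real.exp (-(1/2) * (x ⬝ᵥ (S⁻¹ *ᵥ x)))

section
variable {ι : Type*} [Fintype ι] [DecidableEq ι]

lemma mvGaussian_zero (S : Matrix ι ι ℝ) :
    mvGaussian 0 S = volume.withDensity fun x => ENNReal.ofReal (gaussDensity S x) := by
  simp [mvGaussian, gaussDensity]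

lemma continuous_gaussDensity (S : Matrix ι ι ℝ) : Continuous (gaussDensity S) := by
  unfold gaussDensity
  fun_prop

lemma gaussDensity_pos {S : Matrix ι ι ℝ} (hS : S.PosDef) (x : ι → ℝ) : 0 < gaussDensity S x := by
  have := hS.det_pos
  unfold gaussDensity
  positivity

/-- The standard Gaussian density factors over the coordinates. -/
lemma mvGaussian_zero_one :
    mvGaussian 0 (1 : Matrix ι ι ℝ) = Measure.pi fun _ : ι => gaussianReal 0 1 := by
  symm
  apply Measure.pi_eq
  intro s hs
  have hcont : ∀ x : ι → ℝ, gaussDensity 1 x = ∏ i, gaussianPDFReal 0 1 (x i) := by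
    intro x
    simp only [gaussDensity, gaussianPDFReal, Finset.prod_mul_distrib, ← Real.exp_sum]
    congr 1
    · simp only [Finset.prod_const, Finset.card_univ, det_one, mul_one, NNReal.coe_one, inv_pow]
      have hsq : (2 * Real.pi) ^ Fintype.card ι = (√(2 * Real.pi) ^ Fintype.card ι) ^ 2 := by
        rw [pow_right_comm, Real.sq_sqrt (by positivity)]
      rw [hsq, Real.sqrt_sq (by positivity)]
    · simp [dotProduct, Finset.mul_sum]
      rw [← Finset.sum_neg_distrib]
      refine Finset.sum_congr rfl fun i _ => ?_
      ring
  have hi : ∀ i, Integrable (gaussianPDFReal 0 1) (volume.restrict (s i)) := fun i =>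
    (integrable_gaussianPDFReal 0 1).restrict
  rw [mvGaussian_zero, withDensity_apply _ (MeasurableSet.univ_pi hs), volume_pi,
    Measure.restrict_pi_pi, ← ofReal_integral_eq_lintegral_ofReal]
  · simp_rw [hcont]
    rw [integral_fintype_prod_eq_prod (f := fun _ => gaussianPDFReal 0 1),
      ENNReal.ofReal_prod_of_nonneg]
    · refine Finset.prod_congr rfl fun i _ => ?_
      rw [gaussianReal_apply_eq_integral _ one_ne_zero]
    · exact fun i _ => integral_nonneg fun x => gaussianPDFReal_nonneg _ _ _
  · simp_rw [funext hcont]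
    exact Integrable.fintype_prod hi
  · exact Filter.Eventually.of_forall fun x => (gaussDensity_pos PosDef.one x).le

/-- An invertible linear image `B Z` of a standard Gaussian vector is `N(0, B Bᵀ)`: this is the
linear change of variables, with Jacobian `|det B|`. -/
lemma map_mulVec_pi (B : Matrix ι ι ℝ) (hB : B.det ≠ 0) :
    (Measure.pi fun _ : ι => gaussianReal 0 1).map (B *ᵥ ·) = mvGaussian 0 (B * Bᵀ) := by
  have hBu : IsUnit B.det := hB.isUnit
  rw [← mvGaussian_zero_one, mvGaussian_zero, mvGaussian_zero]
  have hm : Measurable fun x : ι → ℝ => B *ᵥ x := Continuous.measurable (by fun_prop)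
  have hcd : Measurable fun x => ENNReal.ofReal |B.det| * ENNReal.ofReal (gaussDensity (B * Bᵀ) x) :=
    ((continuous_gaussDensity _).measurable.ennreal_ofReal).const_mul _
  have key : (fun x : ι → ℝ => ENNReal.ofReal (gaussDensity 1 x)) =
      (fun x => ENNReal.ofReal |B.det| * ENNReal.ofReal (gaussDensity (B * Bᵀ) x)) ∘
        fun x : ι → ℝ => B *ᵥ x := by
    funext x
    simp only [Function.comp]
    rw [← ENNReal.ofReal_mul (abs_nonneg _)]
    congr 1
    have hq : (B *ᵥ x) ⬝ᵥ ((B * Bᵀ)⁻¹ *ᵥ (B *ᵥ x)) = x ⬝ᵥ x := by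
      have h1 : Bᵀ * (B * Bᵀ)⁻¹ * B = 1 := by
        rw [Matrix.mul_inv_rev, ← Matrix.mul_assoc,
          Matrix.mul_nonsing_inv _ (by simpa using hBu), Matrix.one_mul,
          Matrix.nonsing_inv_mul _ hBu]
      rw [← Matrix.vecMul_transpose B x, ← Matrix.dotProduct_mulVec, Matrix.vecMul_transpose,
        Matrix.mulVec_mulVec, Matrix.mulVec_mulVec, h1, Matrix.one_mulVec]
    have hs : √((2 * Real.pi) ^ Fintype.card ι * (B * Bᵀ).det) =
        √((2 * Real.pi) ^ Fintype.card ι) * |B.det| := by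
      rw [det_mul, det_transpose, Real.sqrt_mul (by positivity), Real.sqrt_mul_self_eq_abs]
    have : |B.det| ≠ 0 := abs_ne_zero.2 hB
    simp only [gaussDensity, hq, hs, det_one, inv_one, one_mulVec, mul_one]
    field_simp
  rw [key, map_withDensity_comp _ hm hcd]
  have := Real.map_matrix_volume_pi_eq_smul_volume_pi hB
  have h2 : Measure.map (fun x : ι → ℝ => B *ᵥ x) volume
      = ENNReal.ofReal (abs (det B)⁻¹) • volume := by
    rw [← this]; rfl
  rw [h2, withDensity_smul_measure]
  change _ • volume.withDensity
    (ENNReal.ofReal |B.det| • fun x => ENNReal.ofReal (gaussDensity (B * Bᵀ) x)) = _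
  rw [withDensity_smul _ (continuous_gaussDensity _).measurable.ennreal_ofReal, smul_smul,
    ← ENNReal.ofReal_mul (abs_nonneg _), ← abs_mul, inv_mul_cancel₀ hB]
  simp

open scoped MatrixOrder in
/-- The density-defined Gaussian agrees with Mathlib's `multivariateGaussian`, which is the image of
the standard Gaussian under `√S`. Through it, characteristic functions and covariances become
available for `mvGaussian`. -/
lemma mvGaussian_eq_map_multivariateGaussian {S : Matrix ι ι ℝ} (hS : S.PosDef) :
    (mvGaussian 0 S).map (toLp 2) = multivariateGaussian 0 S := by
  have h1 : CFC.sqrt S * CFC.sqrt S = S := CFC.sqrt_mul_sqrt_self _ hS.posSemidef.nonneg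
  have h2 : (CFC.sqrt S)ᵀ = CFC.sqrt S := by
    have := (CFC.sqrt_nonneg S).isSelfAdjoint
    rwa [IsSelfAdjoint, star_eq_conjTranspose, conjTranspose_eq_transpose_of_trivial] at this
  have h3 : (CFC.sqrt S).det ≠ 0 := by
    intro h
    have := hS.det_pos
    rw [← h1, det_mul, h] at this
    simp at this
  have h4 := map_mulVec_pi _ h3
  rw [h2, h1] at h4
  rw [← h4, multivariateGaussian, ← map_pi_eq_stdGaussian, Measure.map_map (by fun_prop)
    (Continuous.measurable (by fun_prop)), Measure.map_map (by fun_prop) (by fun_prop)]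
  congr 1
  ext x
  simp

/-- If `Z ~ N(0, S)` on `ℝ^ι` then `E[Zᵀ S⁻¹ Z] = tr(S⁻¹ S) = |ι|`. -/
lemma mvGaussian_quad {S : Matrix ι ι ℝ} (hS : S.PosDef) :
    Integrable (fun x => x ⬝ᵥ (S⁻¹ *ᵥ x)) (mvGaussian 0 S) ∧
      ∫ x, x ⬝ᵥ (S⁻¹ *ᵥ x) ∂(mvGaussian 0 S) = Fintype.card ι := by
  have hG := mvGaussian_eq_map_multivariateGaussian hS
  have hback : mvGaussian 0 S = (multivariateGaussian 0 S).map ofLp := by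
    rw [← hG, Measure.map_map (by fun_prop) (by fun_prop)]
    exact (Measure.map_id).symm
  have hm : Measurable fun x : ι → ℝ => x ⬝ᵥ (S⁻¹ *ᵥ x) := Continuous.measurable (by fun_prop)
  have hL : ∀ i, MemLp (fun x : EuclideanSpace ℝ ι => x i) 2 (multivariateGaussian 0 S) := by
    intro i
    exact (EuclideanSpace.proj i : EuclideanSpace ℝ ι →L[ℝ] ℝ).comp_memLp'
      (IsGaussian.memLp_two_id (μ := multivariateGaussian 0 S))
  have hmean : ∀ i, ∫ x, x i ∂(multivariateGaussian (0 : EuclideanSpace ℝ ι) S) = 0 := by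
    intro i
    have := (EuclideanSpace.proj i : EuclideanSpace ℝ ι →L[ℝ] ℝ).integral_comp_id_comm
      (IsGaussian.integrable_id (μ := multivariateGaussian 0 S))
    simpa using this
  have hcov : ∀ i j, ∫ x, x i * x j ∂(multivariateGaussian (0 : EuclideanSpace ℝ ι) S) = S i j := by
    intro i j
    rw [← covariance_eval_multivariateGaussian (μ := 0) hS.posSemidef i j,
      covariance_eq_sub (hL i) (hL j), hmean, hmean]
    simp
  have hint : ∀ i j, Integrable (fun x : EuclideanSpace ℝ ι => S⁻¹ i j * (x i * x j))
      (multivariateGaussian 0 S) := fun i j => ((hL i).integrable_mul (hL j)).const_mul _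
  have hexp : ∀ x : EuclideanSpace ℝ ι, ofLp x ⬝ᵥ (S⁻¹ *ᵥ ofLp x) =
      ∑ i, ∑ j, S⁻¹ i j * (x i * x j) := by
    intro x
    simp only [dotProduct, mulVec, Finset.mul_sum]
    refine Finset.sum_congr rfl fun i _ => Finset.sum_congr rfl fun j _ => by ring
  rw [hback]
  constructor
  · rw [integrable_map_measure hm.aestronglyMeasurable (by fun_prop)]
    simp only [Function.comp_def, hexp]
    exact integrable_finsetSum _ fun i _ => integrable_finsetSum _ fun j _ => hint i j
  · rw [integral_map (by fun_prop) hm.aestronglyMeasurable]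
    simp only [hexp]
    rw [integral_finsetSum _ fun i _ => integrable_finsetSum _ fun j _ => hint i j]
    simp_rw [integral_finsetSum _ fun j _ => hint _ j, integral_const_mul, hcov]
    have h1 : S⁻¹ * S = 1 := nonsing_inv_mul _ hS.det_pos.ne'.isUnit
    have hsym : ∀ i j, S i j = S j i := fun i j => by
      simpa using (hS.isHermitian.apply i j).symm
    calc ∑ i, ∑ j, S⁻¹ i j * S i j = ∑ i, (S⁻¹ * S) i i := by
          refine Finset.sum_congr rfl fun i _ => ?_
          rw [mul_apply]
          exact Finset.sum_congr rfl fun j _ => by rw [hsym i j]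
      _ = _ := by simp [h1]

end

/-! ### Laws of the channel output and of the pair -/

lemma posDef_channel {d dY : ℕ} {SY : Matrix (Fin dY) (Fin dY) ℝ} (hSY : SY.PosDef)
    {Sn : Matrix (Fin d) (Fin d) ℝ} (hSn : Sn.PosDef) (H : Matrix (Fin d) (Fin dY) ℝ) :
    (H * SY * Hᵀ + Sn).PosDef := by
  have := hSY.posSemidef.mul_mul_conjTranspose_same H
  rw [conjTranspose_eq_transpose_of_trivial] at this
  exact hSn.posSemidef_add this

/-- The output `X = H Y + n` is `N(0, H Σ_Y Hᵀ + Σ_n)`, by multiplying characteristic functions. -/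
lemma map_channel_eq {Ω : Type*} [MeasurableSpace Ω] (P : Measure Ω) [IsProbabilityMeasure P]
    {d dY : ℕ} {SY : Matrix (Fin dY) (Fin dY) ℝ} (hSY : SY.PosDef)
    {Sn : Matrix (Fin d) (Fin d) ℝ} (hSn : Sn.PosDef)
    (H : Matrix (Fin d) (Fin dY) ℝ)
    {Y : Ω → (Fin dY → ℝ)} {n : Ω → (Fin d → ℝ)}
    (hY : Measurable Y) (hn : Measurable n)
    (hlawY : P.map Y = mvGaussian 0 SY) (hlawn : P.map n = mvGaussian 0 Sn)
    (hindep : IndepFun Y n P) :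
    P.map (fun ω => H *ᵥ Y ω + n ω) = mvGaussian 0 (H * SY * Hᵀ + Sn) := by
  have hT := posDef_channel hSY hSn H
  have hHm : Measurable fun y : Fin dY → ℝ => H *ᵥ y := Continuous.measurable (by fun_prop)
  have hX : Measurable (fun ω => H *ᵥ Y ω + n ω) := (hHm.comp hY).add hn
  have hmL : ∀ {k : ℕ}, Measurable (toLp 2 : (Fin k → ℝ) → EuclideanSpace ℝ (Fin k)) := by
    intro k; fun_prop
  have hmY : Measurable fun ω => toLp 2 (Y ω) := hmL.comp hY
  have hmn : Measurable fun ω => toLp 2 (n ω) := hmL.comp hn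
  have hmHY : Measurable fun ω => toLp 2 (H *ᵥ Y ω) := hmL.comp (hHm.comp hY)
  have hmX : Measurable fun ω => toLp 2 (H *ᵥ Y ω) + toLp 2 (n ω) := hmHY.add hmn
  have hcY : ∀ t, charFun (P.map fun ω => toLp 2 (Y ω)) t =
      Complex.exp (- (ofLp t ⬝ᵥ SY *ᵥ ofLp t : ℝ) / 2) := by
    intro t
    have : (P.map fun ω => toLp 2 (Y ω)) = multivariateGaussian 0 SY := by
      rw [← mvGaussian_eq_map_multivariateGaussian hSY, ← hlawY, Measure.map_map hmL hY]; rfl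
    rw [this, charFun_multivariateGaussian hSY.posSemidef]
    simp [neg_div]
  have hcn : ∀ t, charFun (P.map fun ω => toLp 2 (n ω)) t =
      Complex.exp (- (ofLp t ⬝ᵥ Sn *ᵥ ofLp t : ℝ) / 2) := by
    intro t
    have : (P.map fun ω => toLp 2 (n ω)) = multivariateGaussian 0 Sn := by
      rw [← mvGaussian_eq_map_multivariateGaussian hSn, ← hlawn, Measure.map_map hmL hn]; rfl
    rw [this, charFun_multivariateGaussian hSn.posSemidef]
    simp [neg_div]
  have hHY : ∀ t, charFun (P.map fun ω => toLp 2 (H *ᵥ Y ω)) t =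
      charFun (P.map fun ω => toLp 2 (Y ω)) (toLp 2 (Hᵀ *ᵥ ofLp t)) := by
    intro t
    rw [charFun_apply, charFun_apply, integral_map hmHY.aemeasurable
      (by fun_prop), integral_map hmY.aemeasurable (by fun_prop)]
    congr with ω
    simp only [EuclideanSpace.inner_eq_star_dotProduct, star_trivial]
    rw [Matrix.mulVec_transpose, ← Matrix.dotProduct_mulVec]
  have hlift : (P.map fun ω => toLp 2 (H *ᵥ Y ω) + toLp 2 (n ω)) =
      multivariateGaussian 0 (H * SY * Hᵀ + Sn) := by
    have hp : IsProbabilityMeasure (P.map fun ω => toLp 2 (H *ᵥ Y ω) + toLp 2 (n ω)) :=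
      Measure.isProbabilityMeasure_map
        hmX.aemeasurable
    apply Measure.ext_of_charFun
    ext t
    have hi : IndepFun (fun ω => toLp 2 (H *ᵥ Y ω)) (fun ω => toLp 2 (n ω)) P :=
      hindep.comp (hmL.comp hHm) hmL
    rw [hi.charFun_map_fun_add_eq_mul hmHY.aemeasurable
      hmn.aemeasurable, Pi.mul_apply, hHY, hcY, hcn,
      charFun_multivariateGaussian hT.posSemidef, ← Complex.exp_add]
    congr 1
    have : ofLp t ⬝ᵥ (H * SY * Hᵀ + Sn) *ᵥ ofLp t =
        (Hᵀ *ᵥ ofLp t) ⬝ᵥ SY *ᵥ (Hᵀ *ᵥ ofLp t) + ofLp t ⬝ᵥ Sn *ᵥ ofLp t := by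
      rw [add_mulVec, dotProduct_add]
      congr 1
      rw [mulVec_transpose H, ← dotProduct_mulVec, mulVec_mulVec, ← mulVec_transpose,
        mulVec_mulVec]
    rw [this]
    simp
    ring
  have hofL : Measurable (ofLp : EuclideanSpace ℝ (Fin d) → Fin d → ℝ) := by fun_prop
  have := congrArg (Measure.map ofLp) hlift
  rw [← mvGaussian_eq_map_multivariateGaussian hT, Measure.map_map hofL hmL,
    Measure.map_map hofL hmX] at this
  exact this.trans Measure.map_id

lemma log_gaussDensity {ι : Type*} [Fintype ι] [DecidableEq ι] {S : Matrix ι ι ℝ} (hS : S.PosDef)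
    (x : ι → ℝ) : Real.log (gaussDensity S x) =
      -(1/2) * Real.log ((2 * Real.pi) ^ Fintype.card ι) - 1/2 * Real.log S.det
        - 1/2 * (x ⬝ᵥ (S⁻¹ *ᵥ x)) := by
  have := hS.det_pos
  have hpi := Real.pi_pos
  rw [gaussDensity, Real.log_mul (by positivity) (by positivity), Real.log_exp, Real.log_inv,
    Real.log_sqrt (by positivity), Real.log_mul (by positivity) (by positivity)]
  ring

/-- The joint law of `(X, Y)` has density `g_{Σ_Y}(y) g_{Σ_n}(x - H y)`, because the shear
`(y, z) ↦ (H y + z, y)` preserves Lebesgue measure. -/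
lemma map_channel_joint {Ω : Type*} [MeasurableSpace Ω] (P : Measure Ω) [IsProbabilityMeasure P]
    {d dY : ℕ} (SY : Matrix (Fin dY) (Fin dY) ℝ)
    (Sn : Matrix (Fin d) (Fin d) ℝ)
    (H : Matrix (Fin d) (Fin dY) ℝ)
    {Y : Ω → (Fin dY → ℝ)} {n : Ω → (Fin d → ℝ)}
    (hY : Measurable Y) (hn : Measurable n)
    (hlawY : P.map Y = mvGaussian 0 SY) (hlawn : P.map n = mvGaussian 0 Sn)
    (hindep : IndepFun Y n P) :
    P.map (fun ω => (H *ᵥ Y ω + n ω, Y ω)) =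
      (volume.prod volume).withDensity fun p : (Fin d → ℝ) × (Fin dY → ℝ) =>
        ENNReal.ofReal (gaussDensity SY p.2) * ENNReal.ofReal (gaussDensity Sn (p.1 - H *ᵥ p.2)) := by
  have hHm : Measurable fun y : Fin dY → ℝ => H *ᵥ y := Continuous.measurable (by fun_prop)
  have hgY := (continuous_gaussDensity SY).measurable.ennreal_ofReal
  have hgn := (continuous_gaussDensity Sn).measurable.ennreal_ofReal
  have h1 : P.map (fun ω => (Y ω, n ω)) = (volume.prod volume).withDensity fun p =>
      ENNReal.ofReal (gaussDensity SY p.1) * ENNReal.ofReal (gaussDensity Sn p.2) := by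
    rw [(indepFun_iff_map_prod_eq_prod_map_map hY.aemeasurable hn.aemeasurable).1 hindep,
      hlawY, hlawn, mvGaussian_zero, mvGaussian_zero, prod_withDensity hgY hgn]
  have hsh : MeasurePreserving
      (fun p : (Fin dY → ℝ) × (Fin d → ℝ) => (H *ᵥ p.1 + p.2, p.1))
      (volume.prod volume) (volume.prod volume) := by
    have := (MeasurePreserving.id (volume : Measure (Fin dY → ℝ))).skew_product
      (μc := (volume : Measure (Fin d → ℝ))) (μd := (volume : Measure (Fin d → ℝ)))
      (g := fun y z => H *ᵥ y + z) (by exact (hHm.comp measurable_fst).add measurable_snd)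
      (Filter.Eventually.of_forall fun y => map_add_left_eq_self _ _)
    exact Measure.measurePreserving_swap.comp this
  have hg : Measurable fun p : (Fin d → ℝ) × (Fin dY → ℝ) =>
      ENNReal.ofReal (gaussDensity SY p.2) * ENNReal.ofReal (gaussDensity Sn (p.1 - H *ᵥ p.2)) :=
    (hgY.comp measurable_snd).mul
      (hgn.comp (measurable_fst.sub (hHm.comp measurable_snd)))
  have h2 := map_withDensity_comp (volume.prod volume) hsh.measurable hg
  rw [hsh.map_eq] at h2
  rw [← h2]
  have h3 : (fun ω => (H *ᵥ Y ω + n ω, Y ω)) =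
    (fun p : (Fin dY → ℝ) × (Fin d → ℝ) => (H *ᵥ p.1 + p.2, p.1)) ∘ fun ω => (Y ω, n ω) := rfl
  rw [h3, ← Measure.map_map hsh.measurable (hY.prodMk hn), h1]
  congr 2
  funext p
  simp

end GaussianChannel

/-! ### The mutual information -/

/-- **Mutual information of a Gaussian linear channel**: if `Y ~ N(0, Σ_Y)` and
`n ~ N(0, Σ_n)` are independent with `Σ_Y, Σ_n` positive definite, and `X = H Y + n`,
then `I(X; Y) = (1/2) · log(det(H Σ_Y Hᵀ + Σ_n) / det Σ_n)`. -/
theorem miRV_gaussian_linear_channel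
    {Ω : Type*} [MeasurableSpace Ω] (ℙ : Measure Ω) [IsProbabilityMeasure ℙ]
    {d dY : ℕ} (SY : Matrix (Fin dY) (Fin dY) ℝ) (hSY : SY.PosDef)
    (Sn : Matrix (Fin d) (Fin d) ℝ) (hSn : Sn.PosDef)
    (H : Matrix (Fin d) (Fin dY) ℝ)
    (Y : Ω → (Fin dY → ℝ)) (n : Ω → (Fin d → ℝ))
    (hY : Measurable Y) (hn : Measurable n)
    (hlawY : ℙ.map Y = mvGaussian 0 SY) (hlawn : ℙ.map n = mvGaussian 0 Sn)
    (hindep : ProbabilityTheory.IndepFun Y n ℙ) :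
    miRV ℙ (fun ω => H *ᵥ Y ω + n ω) Y
      = ((1/2 * Real.log ((H * SY * Hᵀ + Sn).det / Sn.det) : ℝ) : EReal) := by
  have hT := posDef_channel hSY hSn H
  have hHm : Measurable fun y : Fin dY → ℝ => H *ᵥ y := Continuous.measurable (by fun_prop)
  have hX : Measurable fun ω => H *ᵥ Y ω + n ω := (hHm.comp hY).add hn
  have hlawX := map_channel_eq ℙ hSY hSn H hY hn hlawY hlawn hindep
  have hjoint := map_channel_joint ℙ SY Sn H hY hn hlawY hlawn hindep
  have hXY : Measurable fun ω => (H *ᵥ Y ω + n ω, Y ω) := hX.prodMk hY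
  set T := H * SY * Hᵀ + Sn with hTdef
  set J := ℙ.map (fun ω => (H *ᵥ Y ω + n ω, Y ω)) with hJ
  have hfst : J.map Prod.fst = mvGaussian 0 T := by
    rw [hJ, Measure.map_map measurable_fst hXY, ← hlawX]; rfl
  have hsnd : J.map Prod.snd = mvGaussian 0 SY := by
    rw [hJ, Measure.map_map measurable_snd hXY, ← hlawY]; rfl
  have hgY := (continuous_gaussDensity SY).measurable
  have hgn := (continuous_gaussDensity Sn).measurable
  have hgT := (continuous_gaussDensity T).measurable
  have : IsProbabilityMeasure (mvGaussian 0 T) :=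
    hlawX ▸ Measure.isProbabilityMeasure_map hX.aemeasurable
  have : IsProbabilityMeasure (mvGaussian 0 SY) :=
    hlawY ▸ Measure.isProbabilityMeasure_map hY.aemeasurable
  -- `ρ` is the density of the joint law with respect to the product of the marginals: the common
  -- factor `gaussDensity SY` cancels.
  let ρ : (Fin d → ℝ) × (Fin dY → ℝ) → ℝ := fun p =>
    gaussDensity Sn (p.1 - H *ᵥ p.2) / gaussDensity T p.1
  have hρ : Measurable ρ :=
    (hgn.comp (measurable_fst.sub (hHm.comp measurable_snd))).div (hgT.comp measurable_fst)
  have hdens : J = ((mvGaussian 0 T).prod (mvGaussian 0 SY)).withDensity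
      fun p => ENNReal.ofReal (ρ p) := by
    rw [hjoint, mvGaussian_zero, mvGaussian_zero,
      prod_withDensity hgT.ennreal_ofReal hgY.ennreal_ofReal, ← withDensity_mul]
    · congr 1
      funext p
      have h1 := gaussDensity_pos hT p.1
      have h2 := gaussDensity_pos hSY p.2
      have h3 := gaussDensity_pos hSn (p.1 - H *ᵥ p.2)
      simp only [Pi.mul_apply, ρ]
      rw [← ENNReal.ofReal_mul h2.le, ← ENNReal.ofReal_mul h1.le,
        ← ENNReal.ofReal_mul (by positivity)]
      congr 1
      field_simp
    · exact (hgT.ennreal_ofReal.comp measurable_fst).mul (hgY.ennreal_ofReal.comp measurable_snd)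
    · exact hρ.ennreal_ofReal
  have hac : J ≪ (mvGaussian 0 T).prod (mvGaussian 0 SY) := by
    rw [hdens]; exact withDensity_absolutelyContinuous _ _
  let c : ℝ := 1/2 * Real.log (T.det / Sn.det)
  let qn : (Fin d → ℝ) → ℝ := fun x => x ⬝ᵥ (Sn⁻¹ *ᵥ x)
  let qT : (Fin d → ℝ) → ℝ := fun x => x ⬝ᵥ (T⁻¹ *ᵥ x)
  have hqn : Measurable qn := Continuous.measurable (by fun_prop)
  have hqT : Measurable qT := Continuous.measurable (by fun_prop)
  -- `L = log ρ`; along `(X, Y)` the argument of `qn` is the noise `n`.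
  let L : (Fin d → ℝ) × (Fin dY → ℝ) → ℝ := fun p =>
    c - 1/2 * qn (p.1 - H *ᵥ p.2) + 1/2 * qT p.1
  have hLm : Measurable L :=
    (measurable_const.sub ((hqn.comp (measurable_fst.sub (hHm.comp measurable_snd))).const_mul _)).add
      ((hqT.comp measurable_fst).const_mul _)
  have hllr : (fun p => Real.log (J.rnDeriv ((mvGaussian 0 T).prod (mvGaussian 0 SY)) p).toReal)
      =ᵐ[J] L := by
    have := Measure.rnDeriv_withDensity ((mvGaussian 0 T).prod (mvGaussian 0 SY))
      hρ.ennreal_ofReal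
    rw [← hdens] at this
    filter_upwards [hac.ae_le this] with p hp
    have h1 := gaussDensity_pos hT p.1
    have h3 := gaussDensity_pos hSn (p.1 - H *ᵥ p.2)
    rw [hp, ENNReal.toReal_ofReal (by positivity), Real.log_div h3.ne' h1.ne',
      log_gaussDensity hSn, log_gaussDensity hT]
    simp only [L, c, qn, qT]
    rw [Real.log_div hT.det_pos.ne' hSn.det_pos.ne']
    ring
  obtain ⟨hin, hen⟩ := mvGaussian_quad hSn
  obtain ⟨hiT, heT⟩ := mvGaussian_quad hT
  rw [← hlawn] at hin hen
  rw [← hlawX] at hiT heT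
  rw [integral_map hn.aemeasurable hqn.aestronglyMeasurable] at hen
  rw [integral_map hX.aemeasurable hqT.aestronglyMeasurable] at heT
  have hin' : Integrable (fun ω => qn (n ω)) ℙ := hin.comp_measurable hn
  have hiT' : Integrable (fun ω => qT (H *ᵥ Y ω + n ω)) ℙ := hiT.comp_measurable hX
  have hLcomp : (fun ω => L (H *ᵥ Y ω + n ω, Y ω)) =
      fun ω => c - 1/2 * qn (n ω) + 1/2 * qT (H *ᵥ Y ω + n ω) := by
    funext ω
    simp [L]
  have hicn : Integrable (fun ω => c - 1/2 * qn (n ω)) ℙ :=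
    (integrable_const c).sub (hin'.const_mul _)
  have hLint : Integrable L J := by
    rw [hJ, integrable_map_measure hLm.aestronglyMeasurable hXY.aemeasurable]
    change Integrable (fun ω => L (H *ᵥ Y ω + n ω, Y ω)) ℙ
    rw [hLcomp]
    exact hicn.add (hiT'.const_mul _)
  have hLval : ∫ p, L p ∂J = c := by
    rw [hJ, integral_map hXY.aemeasurable hLm.aestronglyMeasurable, hLcomp,
      integral_add hicn (hiT'.const_mul _),
      integral_sub (integrable_const c) (hin'.const_mul _), integral_const, integral_const_mul,
      integral_const_mul]
    -- Both quadratic forms have mean `d`, so their contributions cancel.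
    rw [hen, heT]
    simp
  change klDiv J ((J.map Prod.fst).prod (J.map Prod.snd)) = _
  rw [hfst, hsnd, klDiv, if_pos ⟨hac, hLint.congr hllr.symm⟩, integral_congr_ae hllr, hLval]
end

section
/- Thin-PID reformulation of the synergy optimization (Theorem 3.3): let Σ_Y be a positive definite d_Y × d_Y real matrix, let H₁ ∈ ℝ^{d₁ × d_Y}, H₂ ∈ ℝ^{d₂ × d_Y}, and let H := [H₁; H₂] be their vertical concatenation. For Y ~ N(0, Σ_Y) and independent noises (n₁, n₂) jointly Gaussian with cov(n₁) = I_{d₁}, cov(n₂) = I_{d₂} and (n₁, n₂) independent of Y, set X₁ = H₁ Y + n₁ and X₂ = H₂ Y + n₂. Then the infimum of I((X₁, X₂); Y) over all jointly Gaussian distributions q of (X₁, X₂, Y) whose (X₁, Y)-marginal and (X₂, Y)-marginal are the prescribed Gaussians equals (1/2) · inf over matrices M ∈ ℝ^{d₁ × d₂} such that Σ_{n₁n₂}(M) := fromBlocks I_{d₁} M Mᵀ I_{d₂} is positive definite of log( det(H Σ_Y Hᵀ + Σ_{n₁n₂}(M)) / det Σ_{n₁n₂}(M) ). -/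
/-!
A Gaussian law of `(X₁, X₂, Y)` with the prescribed pairwise marginals is centered, and its
covariance is determined by them except for the cross-covariance of `X₁` and `X₂`. Hence it is the
law of `(H Y + n, Y)` with noise covariance `N(M) = fromBlocks 1 M Mᵀ 1` for some `M`
(`exists_eq_channelCov`), where `N(M)` is positive semidefinite. If `N(M)` is positive definite, the
mutual information is `(1/2) log (det (H Σ_Y Hᵀ + N(M)) / det N(M))`
(`IsCenteredGaussian.mutualInfo_channel`), computed from the densities. So each admissible `M` on
the right is realized by the law on the left with the same value.

The remaining point is that laws with singular `N(M)` do not lower the infimum. For `s > 0`, adding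
to `(X₁, X₂)` an independent `N(0, s I)` noise changes the noise covariance to `N(M) + s I`, and by
the data processing inequality it does not increase the mutual information
(`IsCenteredGaussian.mutualInfo_smooth_le`). Now `N(M) + s I = (1 + s) N((1 + s)⁻¹ M)`, so
`(1 + s)⁻¹ M` is admissible, and monotonicity of the determinant shows that its value exceeds the
one of the smoothed law by at most `(d₁ + d₂) / 2 * log (1 + s)` (`shrink_noise`). Letting `s → 0`
gives the inequality.

Singular Gaussian laws are handled through their one-dimensional projections
(`IsCenteredGaussian`), which determine the law and behave well under linear maps and convolution;
for positive definite covariances they agree with the density definition `mvGaussian`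
(`isCenteredGaussian_mvGaussian`).
-/

open MeasureTheory Matrix

/-- A probability measure on a finite-dimensional space is (jointly) Gaussian iff
every linear functional pushes it forward to a one-dimensional Gaussian
(possibly degenerate). -/
def IsGaussianMeasure {ι : Type*} [Fintype ι] (q : Measure (ι → ℝ)) : Prop :=
  IsProbabilityMeasure q ∧
    ∀ L : (ι → ℝ) →ₗ[ℝ] ℝ, ∃ m v, q.map L = ProbabilityTheory.gaussianReal m v

/-- Coordinate restriction `(x₁, x₂, y) ↦ (x₁, y)`. -/
def restrict₁Y {d₁ d₂ dY : ℕ} (x : ((Fin d₁ ⊕ Fin d₂) ⊕ Fin dY) → ℝ) :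
    (Fin d₁ ⊕ Fin dY) → ℝ :=
  Sum.elim (fun a => x (Sum.inl (Sum.inl a))) (fun b => x (Sum.inr b))

/-- Coordinate restriction `(x₁, x₂, y) ↦ (x₂, y)`. -/
def restrict₂Y {d₁ d₂ dY : ℕ} (x : ((Fin d₁ ⊕ Fin d₂) ⊕ Fin dY) → ℝ) :
    (Fin d₂ ⊕ Fin dY) → ℝ :=
  Sum.elim (fun a => x (Sum.inl (Sum.inr a))) (fun b => x (Sum.inr b))

/-! ### Centered Gaussian laws with possibly singular covariance -/

/-- `IsCenteredGaussian μ S`: the measure `μ` is the centered Gaussian law with positive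
semidefinite covariance `S`, expressed through its one-dimensional projections, so that singular
covariances are covered. -/
structure IsCenteredGaussian {ι : Type*} [Fintype ι] (μ : Measure (ι → ℝ)) (S : Matrix ι ι ℝ) :
    Prop where
  posSemidef : S.PosSemidef
  map_dotProduct : ∀ t : ι → ℝ,
    μ.map (fun x => t ⬝ᵥ x) = ProbabilityTheory.gaussianReal 0 (t ⬝ᵥ (S *ᵥ t)).toNNReal

theorem measurable_dotProduct_left {ι : Type*} [Fintype ι] (t : ι → ℝ) :
    Measurable (fun x : ι → ℝ => t ⬝ᵥ x) := by
  unfold dotProduct; fun_prop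

theorem measurable_mulVec {ι κ : Type*} [Fintype ι] [Fintype κ] (A : Matrix κ ι ℝ) :
    Measurable (fun x : ι → ℝ => A *ᵥ x) := by
  unfold mulVec dotProduct; fun_prop

/-- The linear functional `x ↦ t ⬝ᵥ x` as an element of the dual. -/
noncomputable def dotCLM {ι : Type*} [Fintype ι] (t : ι → ℝ) : StrongDual ℝ (ι → ℝ) :=
  LinearMap.toContinuousLinearMap
    { toFun := fun x => t ⬝ᵥ x
      map_add' := fun x y => dotProduct_add t x y
      map_smul' := fun c x => by simp [dotProduct_smul] }

theorem dotCLM_apply {ι : Type*} [Fintype ι] (t x : ι → ℝ) : dotCLM t x = t ⬝ᵥ x := rfl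

theorem coe_dotCLM {ι : Type*} [Fintype ι] (t : ι → ℝ) :
    ⇑(dotCLM t) = fun x => t ⬝ᵥ x := rfl

theorem exists_eq_dotCLM {ι : Type*} [Fintype ι] (L : StrongDual ℝ (ι → ℝ)) :
    ∃ t, L = dotCLM t := by
  classical
  refine ⟨fun i => L (Pi.single i 1), ?_⟩
  ext x
  rw [dotCLM_apply]
  have hx : x = ∑ i, x i • Pi.single i (1 : ℝ) := by
    ext j; simp [Finset.sum_apply, Pi.single_apply]
  conv_lhs => rw [hx]
  simp [dotProduct, mul_comm]

namespace IsCenteredGaussian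

variable {ι κ : Type*} [Fintype ι] [Fintype κ] {μ ν : Measure (ι → ℝ)} {S T : Matrix ι ι ℝ}

theorem isProbabilityMeasure (h : IsCenteredGaussian μ S) : IsProbabilityMeasure μ := by
  refine ⟨?_⟩
  have h0 := congrArg (fun m => m Set.univ) (h.map_dotProduct 0)
  simpa [Measure.map_apply (measurable_dotProduct_left 0) MeasurableSet.univ] using h0

/-- A centered Gaussian law is determined by its covariance (Cramér–Wold). -/
theorem measure_ext (h : IsCenteredGaussian μ S) (h' : IsCenteredGaussian ν S) : μ = ν := by
  have := h.isProbabilityMeasure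
  have := h'.isProbabilityMeasure
  apply Measure.ext_of_charFunDual
  ext L
  obtain ⟨t, rfl⟩ := exists_eq_dotCLM L
  rw [charFunDual_eq_charFun_map_one, charFunDual_eq_charFun_map_one, coe_dotCLM,
    h.map_dotProduct, h'.map_dotProduct]

theorem map_mulVec (h : IsCenteredGaussian μ S) (A : Matrix κ ι ℝ) :
    IsCenteredGaussian (μ.map (fun x => A *ᵥ x)) (A * S * Aᵀ) := by
  refine ⟨by simpa using h.posSemidef.mul_mul_conjTranspose_same A, fun t => ?_⟩
  rw [Measure.map_map (measurable_dotProduct_left t) (measurable_mulVec A)]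
  have e : (fun x => t ⬝ᵥ x) ∘ (fun x => A *ᵥ x) = fun x => (Aᵀ *ᵥ t) ⬝ᵥ x := by
    ext x
    simp [dotProduct_mulVec, mulVec_transpose]
  rw [e, h.map_dotProduct]
  congr 2
  rw [← mulVec_mulVec, ← mulVec_mulVec, mulVec_transpose, dotProduct_mulVec t A]

theorem conv (h : IsCenteredGaussian μ S) (h' : IsCenteredGaussian ν T) :
    IsCenteredGaussian (μ ∗ ν) (S + T) := by
  have := h.isProbabilityMeasure
  have := h'.isProbabilityMeasure
  refine ⟨h.posSemidef.add h'.posSemidef, fun t => ?_⟩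
  rw [← coe_dotCLM, Measure.map_conv_continuousLinearMap, coe_dotCLM, h.map_dotProduct,
    h'.map_dotProduct, ProbabilityTheory.gaussianReal_conv_gaussianReal, add_zero, add_mulVec,
    dotProduct_add, Real.toNNReal_add]
  · simpa using h.posSemidef.dotProduct_mulVec_nonneg t
  · simpa using h'.posSemidef.dotProduct_mulVec_nonneg t

theorem memLp_dotProduct (h : IsCenteredGaussian μ S) (t : ι → ℝ) :
    MemLp (fun x => t ⬝ᵥ x) 2 μ := by
  have := (ProbabilityTheory.memLp_id_gaussianReal (μ := 0) (v := (t ⬝ᵥ (S *ᵥ t)).toNNReal) 2)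
  rw [← h.map_dotProduct, memLp_map_measure_iff (by fun_prop)
    (measurable_dotProduct_left t).aemeasurable] at this
  exact this

theorem integral_dotProduct_sq (h : IsCenteredGaussian μ S) (t : ι → ℝ) :
    ∫ x, (t ⬝ᵥ x) ^ 2 ∂μ = t ⬝ᵥ (S *ᵥ t) := by
  have h1 : ∫ y, y ^ 2 ∂(μ.map (fun x => t ⬝ᵥ x)) = ∫ x, (t ⬝ᵥ x) ^ 2 ∂μ :=
    integral_map (measurable_dotProduct_left t).aemeasurable (by fun_prop)
  have h2 := ProbabilityTheory.variance_fun_id_gaussianReal (μ := 0)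
    (v := (t ⬝ᵥ (S *ᵥ t)).toNNReal)
  rw [ProbabilityTheory.variance_of_integral_eq_zero (by fun_prop)
    (by simp)] at h2
  rw [← h1, h.map_dotProduct, h2, Real.coe_toNNReal]
  simpa using h.posSemidef.dotProduct_mulVec_nonneg t

theorem integral_dotProduct (h : IsCenteredGaussian μ S) (t : ι → ℝ) :
    ∫ x, t ⬝ᵥ x ∂μ = 0 := by
  have h1 : ∫ y, y ∂(μ.map (fun x => t ⬝ᵥ x)) = ∫ x, t ⬝ᵥ x ∂μ :=
    integral_map (measurable_dotProduct_left t).aemeasurable (by fun_prop)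
  rw [← h1, h.map_dotProduct]
  simp

theorem memLp_eval (h : IsCenteredGaussian μ S) (i : ι) : MemLp (fun x => x i) 2 μ := by
  classical
  simpa using h.memLp_dotProduct (Pi.single i 1)

theorem integral_eval (h : IsCenteredGaussian μ S) (i : ι) : ∫ x, x i ∂μ = 0 := by
  classical
  simpa using h.integral_dotProduct (Pi.single i 1)

theorem integrable_eval_mul (h : IsCenteredGaussian μ S) (i j : ι) :
    Integrable (fun x => x i * x j) μ := (h.memLp_eval i).integrable_mul (h.memLp_eval j)

theorem integral_eval_mul (h : IsCenteredGaussian μ S) (i j : ι) :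
    ∫ x, x i * x j ∂μ = S i j := by
  classical
  have hii := h.integral_dotProduct_sq (Pi.single i 1)
  have hjj := h.integral_dotProduct_sq (Pi.single j 1)
  have hij := h.integral_dotProduct_sq (Pi.single i 1 + Pi.single j 1)
  have hs : S j i = S i j := by simpa using h.posSemidef.isHermitian.apply i j
  simp [mulVec_add, add_dotProduct] at hii hjj hij
  have e : ∀ x : ι → ℝ, (x i + x j) ^ 2 = x i ^ 2 + x j ^ 2 + 2 * (x i * x j) := fun x => by ring
  simp_rw [e] at hij
  have i1 := (h.memLp_eval i).integrable_sq
  have i2 := (h.memLp_eval j).integrable_sq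
  have i12 : Integrable (fun x : ι → ℝ => x i ^ 2 + x j ^ 2) μ := i1.add i2
  rw [integral_add i12 ((h.integrable_eval_mul i j).const_mul 2), integral_add i1 i2,
    integral_const_mul, hii, hjj] at hij
  linarith

/-- The covariance of a centered Gaussian law is unique. -/
theorem cov_ext (h : IsCenteredGaussian μ S) (h' : IsCenteredGaussian μ T) : S = T := by
  ext i j
  rw [← h.integral_eval_mul, h'.integral_eval_mul]

theorem integrable_quadratic (h : IsCenteredGaussian μ S) (B : Matrix ι ι ℝ) :
    Integrable (fun x => x ⬝ᵥ (B *ᵥ x)) μ := by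
  simp only [dotProduct, mulVec, Finset.mul_sum]
  refine integrable_finsetSum _ fun i _ => integrable_finsetSum _ fun j _ => ?_
  refine ((h.integrable_eval_mul i j).const_mul (B i j)).congr (ae_of_all _ fun x => ?_)
  simp only; ring

theorem integral_quadratic (h : IsCenteredGaussian μ S) (B : Matrix ι ι ℝ) :
    ∫ x, x ⬝ᵥ (B *ᵥ x) ∂μ = (B * S).trace := by
  have hs : ∀ i j, S j i = S i j := fun i j => by
    simpa using h.posSemidef.isHermitian.apply i j
  have e : ∀ x : ι → ℝ, x ⬝ᵥ (B *ᵥ x) = ∑ i, ∑ j, B i j * (x i * x j) := fun x => by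
    simp only [dotProduct, mulVec, Finset.mul_sum]
    refine Finset.sum_congr rfl fun i _ => Finset.sum_congr rfl fun j _ => by ring
  simp_rw [e]
  rw [integral_finsetSum _ fun i _ => integrable_finsetSum _ fun j _ =>
    (h.integrable_eval_mul i j).const_mul (B i j)]
  simp only [trace, diag, mul_apply]
  refine Finset.sum_congr rfl fun i _ => ?_
  rw [integral_finsetSum _ fun j _ => (h.integrable_eval_mul i j).const_mul (B i j)]
  refine Finset.sum_congr rfl fun j _ => ?_
  rw [integral_const_mul, h.integral_eval_mul, hs]

end IsCenteredGaussian

/-- The law of independent standard normals. -/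
theorem isCenteredGaussian_pi (ι : Type*) [Fintype ι] [DecidableEq ι] :
    IsCenteredGaussian (Measure.pi fun _ : ι => ProbabilityTheory.gaussianReal 0 1) 1 := by
  refine ⟨PosSemidef.one, fun t => ?_⟩
  rw [← coe_dotCLM]
  apply Measure.ext_of_charFun
  ext s
  have hs : charFun ((Measure.pi fun _ : ι => ProbabilityTheory.gaussianReal 0 1).map
      (dotCLM t)) s
      = charFunDual (Measure.pi fun _ : ι => ProbabilityTheory.gaussianReal 0 1)
        (dotCLM (s • t)) := by
    rw [charFunDual_apply, charFun_apply, integral_map (by fun_prop) (by fun_prop)]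
    refine integral_congr_ae (ae_of_all _ fun x => ?_)
    simp [dotCLM_apply, mul_comm]
  have e : ∀ i : ι, charFunDual (ProbabilityTheory.gaussianReal 0 1)
      ((dotCLM (s • t)).comp (.single ℝ (fun _ => ℝ) i))
      = charFun (ProbabilityTheory.gaussianReal 0 1) (s * t i) := fun i => by
    rw [charFunDual_apply, charFun_apply]
    refine integral_congr_ae (ae_of_all _ fun x => ?_)
    simp [dotCLM_apply, mul_comm, mul_left_comm]
  rw [hs, charFunDual_pi]
  simp_rw [e, ProbabilityTheory.charFun_gaussianReal]
  rw [← Complex.exp_sum]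
  congr 1
  have hn : 0 ≤ t ⬝ᵥ t := by simpa using dotProduct_star_self_nonneg t
  rw [one_mulVec, Real.coe_toNNReal _ hn]
  simp [dotProduct, Finset.sum_mul, Finset.sum_div, mul_pow]
  refine Finset.sum_congr rfl fun i _ => by ring

/-! ### Gaussian densities -/

theorem measurable_quadratic {γ : Type*} [Fintype γ] (W : Matrix γ γ ℝ) :
    Measurable fun x : γ → ℝ => x ⬝ᵥ (W *ᵥ x) := by
  simp only [dotProduct, mulVec]; fun_prop

theorem measurable_gaussianDensity {γ : Type*} [Fintype γ] [DecidableEq γ] (W : Matrix γ γ ℝ) :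
    Measurable fun x : γ → ℝ =>
      ENNReal.ofReal ((Real.sqrt ((2 * Real.pi) ^ (Fintype.card γ) * W.det))⁻¹ *
      Real.exp (-(1/2) * ((x - 0) ⬝ᵥ (W⁻¹ *ᵥ (x - 0))))) := by
  simp only [dotProduct, mulVec]; fun_prop

/-- Density of the standard normal law on `ι → ℝ`. -/
theorem pi_gaussianReal_eq_withDensity (ι : Type*) [Fintype ι] [DecidableEq ι] :
    (Measure.pi fun _ : ι => ProbabilityTheory.gaussianReal 0 1)
      = mvGaussian 0 (1 : Matrix ι ι ℝ) := by
  have hd : ∀ x : ι → ℝ,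
      ENNReal.ofReal ((Real.sqrt ((2 * Real.pi) ^ (Fintype.card ι) * (1 : Matrix ι ι ℝ).det))⁻¹ *
        Real.exp (-(1/2) * ((x - 0) ⬝ᵥ ((1 : Matrix ι ι ℝ)⁻¹ *ᵥ (x - 0)))))
      = ∏ i, ProbabilityTheory.gaussianPDF 0 1 (x i) := by
    intro x
    simp only [ProbabilityTheory.gaussianPDF]
    rw [← ENNReal.ofReal_prod_of_nonneg fun i _ => ProbabilityTheory.gaussianPDFReal_nonneg _ _ _]
    congr 1
    simp only [ProbabilityTheory.gaussianPDFReal, sub_zero, inv_one, one_mulVec, det_one, mul_one,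
      NNReal.coe_one, Finset.prod_mul_distrib, Finset.prod_const, Finset.card_univ]
    rw [← Real.exp_sum, inv_pow]
    congr 2
    · rw [Real.sqrt_eq_iff_mul_self_eq (by positivity) (by positivity), ← mul_pow,
        Real.mul_self_sqrt (by positivity)]
    · rw [dotProduct, Finset.mul_sum]
      exact Finset.sum_congr rfl fun i _ => by ring
  apply Measure.pi_eq
  intro s hs
  unfold mvGaussian
  simp_rw [hd, ProbabilityTheory.gaussianPDF]
  rw [withDensity_apply _ (MeasurableSet.univ_pi hs), volume_pi, Measure.restrict_pi_pi]
  simp_rw [← ENNReal.ofReal_prod_of_nonneg fun i (_ : i ∈ Finset.univ) =>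
    ProbabilityTheory.gaussianPDFReal_nonneg 0 1 _]
  rw [← ofReal_integral_eq_lintegral_ofReal
    (Integrable.fintype_prod fun i =>
      (ProbabilityTheory.integrable_gaussianPDFReal 0 1).restrict)
    (ae_of_all _ fun x => Finset.prod_nonneg fun i _ =>
      ProbabilityTheory.gaussianPDFReal_nonneg _ _ _),
    integral_fintype_prod_eq_prod, ENNReal.ofReal_prod_of_nonneg fun i _ => integral_nonneg
      fun x => ProbabilityTheory.gaussianPDFReal_nonneg _ _ _]
  refine Finset.prod_congr rfl fun i _ => ?_
  rw [ProbabilityTheory.gaussianReal_apply_eq_integral _ one_ne_zero]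

/-- A positive definite real matrix has an invertible Gram factorization. -/
theorem exists_eq_mul_transpose {ι : Type*} [Fintype ι] [DecidableEq ι] {S : Matrix ι ι ℝ}
    (hS : S.PosDef) : ∃ B : Matrix ι ι ℝ, S = B * Bᵀ ∧ B.det ≠ 0 := by
  open scoped MatrixOrder in
  obtain ⟨B, hB⟩ := CStarAlgebra.nonneg_iff_eq_star_mul_self.mp hS.posSemidef.nonneg
  have hB' : S = Bᵀ * B := by simpa [star_eq_conjTranspose] using hB
  refine ⟨Bᵀ, by simpa using hB', fun h0 => hS.det_pos.ne' ?_⟩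
  rw [hB', det_mul, h0, zero_mul]

/-- The Gaussian with covariance `B Bᵀ`, `B` invertible, is the image under `B` of the standard
normal law: linear change of variables. -/
theorem map_pi_gaussianReal {ι : Type*} [Fintype ι] [DecidableEq ι] {B : Matrix ι ι ℝ}
    (hB : B.det ≠ 0) :
    (Measure.pi fun _ : ι => ProbabilityTheory.gaussianReal 0 1).map (fun x => B *ᵥ x)
      = mvGaussian 0 (B * Bᵀ) := by
  have hu : IsUnit B.det := isUnit_iff_ne_zero.mpr hB
  rw [pi_gaussianReal_eq_withDensity]
  ext s hs
  have hm := measurable_mulVec B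
  have hvol := Real.map_matrix_volume_pi_eq_smul_volume_pi hB
  have hvol' : (volume : Measure (ι → ℝ))
      = ENNReal.ofReal |B.det| • (volume.map fun x => B *ᵥ x) := by
    have : (volume.map fun x => B *ᵥ x)
        = ENNReal.ofReal |B.det⁻¹| • (volume : Measure (ι → ℝ)) := hvol
    rw [this, smul_smul, ← ENNReal.ofReal_mul (abs_nonneg _), ← abs_mul, mul_inv_cancel₀ hB]
    simp
  unfold mvGaussian
  rw [Measure.map_apply hm hs, withDensity_apply _ (hm hs), withDensity_apply _ hs]
  conv_rhs => rw [hvol']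
  rw [Measure.restrict_smul, lintegral_smul_measure,
    setLIntegral_map hs (measurable_gaussianDensity _) hm, smul_eq_mul,
    ← lintegral_const_mul' _ _ ENNReal.ofReal_ne_top]
  refine lintegral_congr fun x => ?_
  rw [← ENNReal.ofReal_mul (abs_nonneg _), ← mul_assoc]
  congr 2
  · rw [det_mul, det_transpose, det_one, mul_one, ← mul_assoc,
      mul_assoc, Real.sqrt_mul (by positivity), Real.sqrt_mul_self_eq_abs, mul_inv]
    have : |B.det| ≠ 0 := abs_ne_zero.mpr hB
    field_simp
  · congr 2
    have hut : IsUnit Bᵀ.det := by rwa [det_transpose]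
    simp only [sub_zero, inv_one, one_mulVec]
    rw [Matrix.mul_inv_rev, mulVec_mulVec, mul_assoc, nonsing_inv_mul _ hu, mul_one,
      ← transpose_nonsing_inv, mulVec_transpose, dotProduct_comm (B *ᵥ x), ← dotProduct_mulVec,
      mulVec_mulVec, nonsing_inv_mul _ hu, one_mulVec]

theorem isCenteredGaussian_mvGaussian {ι : Type*} [Fintype ι] [DecidableEq ι] {S : Matrix ι ι ℝ}
    (hS : S.PosDef) : IsCenteredGaussian (mvGaussian 0 S) S := by
  obtain ⟨B, rfl, hB⟩ := exists_eq_mul_transpose hS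
  rw [← map_pi_gaussianReal hB]
  simpa using (isCenteredGaussian_pi ι).map_mulVec B

/-- A Gaussian law whose coordinates have mean zero is the centered Gaussian law of its
second-moment matrix. -/
theorem IsGaussianMeasure.isCenteredGaussian {ι : Type*} [Fintype ι] {q : Measure (ι → ℝ)}
    (hq : IsGaussianMeasure q) (h0 : ∀ i, ∫ x, x i ∂q = 0) :
    IsCenteredGaussian q (Matrix.of fun i j => ∫ x, x i * x j ∂q) := by
  classical
  have := hq.1
  have hL : ∀ t : ι → ℝ, ∃ m v,
      q.map (fun x => t ⬝ᵥ x) = ProbabilityTheory.gaussianReal m v := fun t => hq.2 (dotCLM t)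
  have hLp : ∀ t : ι → ℝ, MemLp (fun x => t ⬝ᵥ x) 2 q := by
    intro t
    obtain ⟨m, v, h⟩ := hL t
    have := ProbabilityTheory.memLp_id_gaussianReal (μ := m) (v := v) 2
    rw [← h, memLp_map_measure_iff (by fun_prop)
      (measurable_dotProduct_left t).aemeasurable] at this
    exact this
  have hLi : ∀ i, MemLp (fun x : ι → ℝ => x i) 2 q := fun i => by
    simpa using hLp (Pi.single i 1)
  have hij : ∀ i j, Integrable (fun x : ι → ℝ => x i * x j) q := fun i j =>
    (hLi i).integrable_mul (hLi j)
  have hmean : ∀ t : ι → ℝ, ∫ x, t ⬝ᵥ x ∂q = 0 := by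
    intro t
    simp only [dotProduct]
    rw [integral_finsetSum _ fun i _ => ((hLi i).integrable one_le_two).const_mul (t i)]
    simp [integral_const_mul, h0]
  have hsq : ∀ t : ι → ℝ, ∫ x, (t ⬝ᵥ x) ^ 2 ∂q
      = t ⬝ᵥ ((Matrix.of fun i j => ∫ x, x i * x j ∂q) *ᵥ t) := by
    intro t
    have e : ∀ x : ι → ℝ, (t ⬝ᵥ x) ^ 2 = ∑ i, ∑ j, (t i * t j) * (x i * x j) := fun x => by
      rw [sq, dotProduct, Finset.sum_mul_sum]
      exact Finset.sum_congr rfl fun i _ => Finset.sum_congr rfl fun j _ => by ring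
    simp_rw [e]
    rw [integral_finsetSum _ fun i _ => integrable_finsetSum _ fun j _ =>
      (hij i j).const_mul _]
    simp only [dotProduct, mulVec, Finset.mul_sum, Matrix.of_apply]
    refine Finset.sum_congr rfl fun i _ => ?_
    rw [integral_finsetSum _ fun j _ => (hij i j).const_mul _]
    refine Finset.sum_congr rfl fun j _ => ?_
    rw [integral_const_mul]; ring
  refine ⟨?_, fun t => ?_⟩
  · refine .of_dotProduct_mulVec_nonneg ?_ fun t => ?_
    · ext i j
      simp [mul_comm]
    · rw [star_trivial, ← hsq]
      exact integral_nonneg fun x => sq_nonneg _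
  · obtain ⟨m, v, h⟩ := hL t
    have hm : m = 0 := by
      have h1 : ∫ y, y ∂(q.map (fun x => t ⬝ᵥ x)) = ∫ x, t ⬝ᵥ x ∂q :=
        integral_map (measurable_dotProduct_left t).aemeasurable (by fun_prop)
      rw [h, hmean] at h1
      simpa using h1
    subst hm
    have hv : (v : ℝ) = t ⬝ᵥ ((Matrix.of fun i j => ∫ x, x i * x j ∂q) *ᵥ t) := by
      have h1 : ∫ y, y ^ 2 ∂(q.map (fun x => t ⬝ᵥ x)) = ∫ x, (t ⬝ᵥ x) ^ 2 ∂q :=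
        integral_map (measurable_dotProduct_left t).aemeasurable (by fun_prop)
      have h2 := ProbabilityTheory.variance_fun_id_gaussianReal (μ := 0) (v := v)
      rw [ProbabilityTheory.variance_of_integral_eq_zero (by fun_prop) (by simp)] at h2
      rw [← hsq, ← h1, h, h2]
    rw [h, ← hv, Real.toNNReal_coe]

theorem IsCenteredGaussian.isGaussianMeasure {ι : Type*} [Fintype ι] {q : Measure (ι → ℝ)}
    {S : Matrix ι ι ℝ} (hq : IsCenteredGaussian q S) : IsGaussianMeasure q := by
  refine ⟨hq.isProbabilityMeasure, fun L => ?_⟩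
  obtain ⟨t, ht⟩ := exists_eq_dotCLM (LinearMap.toContinuousLinearMap L)
  refine ⟨0, (t ⬝ᵥ (S *ᵥ t)).toNNReal, ?_⟩
  have : ⇑L = fun x => t ⬝ᵥ x := by
    rw [← coe_dotCLM, ← ht]; rfl
  rw [this, hq.map_dotProduct]

/-! ### Mutual information -/

/-- On probability measures, the divergence agrees with the one of Mathlib. -/
theorem klDiv_eq_coe {α : Type*} [MeasurableSpace α] (P Q : Measure α) [IsProbabilityMeasure P]
    [IsProbabilityMeasure Q] : klDiv P Q = (InformationTheory.klDiv P Q : EReal) := by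
  unfold klDiv
  split_ifs with h
  · have h2 : Integrable (llr P Q) P := h.2
    rw [InformationTheory.klDiv_of_ac_of_integrable h.1 h2]
    have hn := InformationTheory.integral_llr_add_sub_measure_univ_nonneg h.1 h2
    rw [EReal.coe_ennreal_ofReal, max_eq_left hn]
    simp [llr]
  · rw [InformationTheory.klDiv_eq_top_iff.mpr fun h1 h2 => h ⟨h1, h2⟩]
    simp

/-- Adding independent noise `ρ` to the first component does not increase mutual information. -/
theorem mutualInfo_noise_le {α β : Type*} [MeasurableSpace α] [MeasurableSpace β]
    [StandardBorelSpace α] [StandardBorelSpace β] [Nonempty α] [Nonempty β]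
    [Add α] [MeasurableAdd₂ α] (P : Measure (α × β)) [IsProbabilityMeasure P]
    (ρ : Measure α) [IsProbabilityMeasure ρ] :
    mutualInfo ((P.prod ρ).map fun z => (z.1.1 + z.2, z.1.2)) ≤ mutualInfo P := by
  have hg : Measurable fun z : (α × β) × α => (z.1.1 + z.2, z.1.2) := by fun_prop
  have hP1 : IsProbabilityMeasure (P.map Prod.fst) :=
    Measure.isProbabilityMeasure_map (by fun_prop)
  have hP2 : IsProbabilityMeasure (P.map Prod.snd) :=
    Measure.isProbabilityMeasure_map (by fun_prop)
  have hPn : IsProbabilityMeasure ((P.prod ρ).map fun z => (z.1.1 + z.2, z.1.2)) :=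
    Measure.isProbabilityMeasure_map (by fun_prop)
  set P' := (P.prod ρ).map fun z => (z.1.1 + z.2, z.1.2) with hP'
  have hf : P'.map Prod.fst = ((P.map Prod.fst).prod ρ).map fun z => z.1 + z.2 := by
    rw [hP', Measure.map_map (by fun_prop) hg, ← Measure.map_id (μ := ρ),
      Measure.map_prod_map _ _ (by fun_prop) (by fun_prop), Measure.map_id,
      Measure.map_map (by fun_prop) (by fun_prop)]
    rfl
  have hs : P'.map Prod.snd = P.map Prod.snd := by
    rw [hP', Measure.map_map (by fun_prop) hg]
    have : (Prod.snd ∘ fun z : (α × β) × α => (z.1.1 + z.2, z.1.2)) = Prod.snd ∘ Prod.fst := rfl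
    rw [this, ← Measure.map_map (by fun_prop) (by fun_prop)]
    simp [Measure.map_fst_prod]
  have hprod : (P'.map Prod.fst).prod (P'.map Prod.snd)
      = (((P.map Prod.fst).prod (P.map Prod.snd)).prod ρ).map
        fun z => (z.1.1 + z.2, z.1.2) := by
    rw [hf, hs]
    set μ := P.map Prod.fst
    set ν := P.map Prod.snd
    conv_lhs => rw [← Measure.map_id (μ := ν)]
    rw [Measure.map_prod_map _ _ (by fun_prop) (by fun_prop)]
    have hsw : (μ.prod ρ).prod ν = ((μ.prod ν).prod ρ).map fun z => ((z.1.1, z.2), z.1.2) := by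
      have h1 := (Measure.prodAssoc_prod (μ := μ) (ν := ν) (τ := ρ))
      have h2 := (Measure.prodAssoc_prod (μ := μ) (ν := ρ) (τ := ν))
      have h3 := (Measure.prod_swap (μ := ρ) (ν := ν))
      have h4 : (μ.prod (ρ.prod ν)).map MeasurableEquiv.prodAssoc.symm = (μ.prod ρ).prod ν := by
        rw [← h2, Measure.map_map (by fun_prop) (by fun_prop)]; simp
      rw [← h4]
      have h5 : μ.prod (ρ.prod ν) = (μ.prod (ν.prod ρ)).map (Prod.map id Prod.swap) := by
        rw [← Measure.map_prod_map _ _ (by fun_prop) (by fun_prop), Measure.map_id,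
          Measure.prod_swap]
      rw [h5, ← h1, Measure.map_map (by fun_prop) (by fun_prop),
        Measure.map_map (by fun_prop) (by fun_prop)]
      rfl
    rw [hsw, Measure.map_map (by fun_prop) (by fun_prop)]
    rfl
  unfold mutualInfo
  have : IsProbabilityMeasure (P'.map Prod.fst) :=
    Measure.isProbabilityMeasure_map (by fun_prop)
  have : IsProbabilityMeasure (P'.map Prod.snd) :=
    Measure.isProbabilityMeasure_map (by fun_prop)
  rw [klDiv_eq_coe, klDiv_eq_coe, EReal.coe_ennreal_le_coe_ennreal_iff, hprod]
  refine (InformationTheory.klDiv_map_le _ _ hg).trans (le_of_eq ?_)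
  rw [← Measure.compProd_const, ← Measure.compProd_const, InformationTheory.klDiv_compProd_left]

/-- Mutual information of a nondegenerate Gaussian pair. The log-likelihood ratio of the joint law
to the product of its marginals is a constant plus quadratic forms in the inverse covariances;
their expectations are traces of identity matrices, which cancel, and the constant remains. -/
theorem IsCenteredGaussian.mutualInfo_eq {α β : Type*} [Fintype α] [Fintype β] [DecidableEq α]
    [DecidableEq β] {A : Matrix α α ℝ} {B : Matrix α β ℝ} {C : Matrix β α ℝ} {D : Matrix β β ℝ}
    {μ : Measure (α ⊕ β → ℝ)} (hμ : IsCenteredGaussian μ (fromBlocks A B C D))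
    (hpd : (fromBlocks A B C D).PosDef) (hA : A.PosDef) (hD : D.PosDef) :
    mutualInfo (μ.map (MeasurableEquiv.sumPiEquivProdPi fun _ => ℝ))
      = ((1 / 2 * Real.log (A.det * D.det / (fromBlocks A B C D).det) : ℝ) : EReal) := by
  set e := MeasurableEquiv.sumPiEquivProdPi (fun _ : α ⊕ β => ℝ) with he
  set S := fromBlocks A B C D with hSdef
  have hμp := hμ.isProbabilityMeasure
  have h1 : IsCenteredGaussian ((μ.map e).map Prod.fst) A := by
    have := hμ.map_mulVec (fromCols (1 : Matrix α α ℝ) (0 : Matrix α β ℝ))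
    rw [Measure.map_map (by fun_prop) (by fun_prop)]
    convert this using 1
    · congr 1
      ext x i
      simp [fromCols_mulVec, he]
      rfl
    · simp [hSdef, fromCols_mul_fromBlocks, transpose_fromCols, fromCols_mul_fromRows]
  have h2 : IsCenteredGaussian ((μ.map e).map Prod.snd) D := by
    have := hμ.map_mulVec (fromCols (0 : Matrix β α ℝ) (1 : Matrix β β ℝ))
    rw [Measure.map_map (by fun_prop) (by fun_prop)]
    convert this using 1
    · congr 1
      ext x i
      simp [fromCols_mulVec, he]
      rfl
    · simp [hSdef, fromCols_mul_fromBlocks, transpose_fromCols, fromCols_mul_fromRows]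
  have m1 := h1.measure_ext (isCenteredGaussian_mvGaussian hA)
  have m2 := h2.measure_ext (isCenteredGaussian_mvGaussian hD)
  have m := hμ.measure_ext (isCenteredGaussian_mvGaussian hpd)
  have hp1 := h1.isProbabilityMeasure
  have hp2 := h2.isProbabilityMeasure
  set Q := ((μ.map e).map Prod.fst).prod ((μ.map e).map Prod.snd) with hQ
  set c := 1 / 2 * Real.log (A.det * D.det / S.det) with hc
  -- `g` is the logarithm of the density of the joint law with respect to `Q`
  let g : (α → ℝ) × (β → ℝ) → ℝ := fun p =>
    c - 1 / 2 * (e.symm p ⬝ᵥ (S⁻¹ *ᵥ e.symm p)) + 1 / 2 * (p.1 ⬝ᵥ (A⁻¹ *ᵥ p.1))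
      + 1 / 2 * (p.2 ⬝ᵥ (D⁻¹ *ᵥ p.2))
  have hgm : Measurable g := by
    have a1 := (measurable_quadratic S⁻¹).comp e.symm.measurable
    have a2 := (measurable_quadratic A⁻¹).comp
      (show Measurable fun p : (α → ℝ) × (β → ℝ) => p.1 by fun_prop)
    have a3 := (measurable_quadratic D⁻¹).comp
      (show Measurable fun p : (α → ℝ) × (β → ℝ) => p.2 by fun_prop)
    exact (((a1.const_mul _).const_sub c).add (a2.const_mul _)).add (a3.const_mul _)
  have hPQ : μ.map e = Q.withDensity fun p => ENNReal.ofReal (Real.exp (g p)) := by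
    have hQd : Q = (volume.prod volume).withDensity fun p : (α → ℝ) × (β → ℝ) =>
        ENNReal.ofReal ((Real.sqrt ((2 * Real.pi) ^ (Fintype.card α) * A.det))⁻¹ *
          Real.exp (-(1/2) * ((p.1 - 0) ⬝ᵥ (A⁻¹ *ᵥ (p.1 - 0))))) *
        ENNReal.ofReal ((Real.sqrt ((2 * Real.pi) ^ (Fintype.card β) * D.det))⁻¹ *
          Real.exp (-(1/2) * ((p.2 - 0) ⬝ᵥ (D⁻¹ *ᵥ (p.2 - 0))))) := by
      rw [hQ, m1, m2]
      unfold mvGaussian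
      rw [prod_withDensity (measurable_gaussianDensity A) (measurable_gaussianDensity D)]
    have hμd : μ.map e = (volume.prod volume).withDensity fun p : (α → ℝ) × (β → ℝ) =>
        ENNReal.ofReal ((Real.sqrt ((2 * Real.pi) ^ (Fintype.card (α ⊕ β)) * S.det))⁻¹ *
          Real.exp (-(1/2) * ((e.symm p - 0) ⬝ᵥ (S⁻¹ *ᵥ (e.symm p - 0))))) := by
      ext s hs
      rw [m, Measure.map_apply e.measurable hs]
      unfold mvGaussian
      rw [withDensity_apply _ (e.measurable hs), withDensity_apply _ hs]
      have hv := (volume_measurePreserving_sumPiEquivProdPi fun _ : α ⊕ β => ℝ)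
      have hc := hv.setLIntegral_comp_preimage hs
        ((measurable_gaussianDensity S).comp e.symm.measurable)
      rw [← Measure.volume_eq_prod]
      refine Eq.trans ?_ hc
      simp [← he]
    have hAD := ((measurable_gaussianDensity A).comp
      (measurable_fst : Measurable (Prod.fst : (α → ℝ) × (β → ℝ) → _))).mul
      ((measurable_gaussianDensity D).comp
      (measurable_snd : Measurable (Prod.snd : (α → ℝ) × (β → ℝ) → _)))
    have hgE : Measurable fun p => ENNReal.ofReal (Real.exp (g p)) := by fun_prop
    rw [hμd, hQd]
    refine Eq.trans ?_ (withDensity_mul (volume.prod volume) hAD hgE)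
    congr 1
    funext p
    have hApos := hA.det_pos
    have hDpos := hD.det_pos
    have hSpos := hpd.det_pos
    have hexpc : Real.exp c = Real.sqrt (A.det * D.det) / Real.sqrt S.det := by
      rw [← Real.sqrt_div (by positivity), Real.sqrt_eq_rpow, Real.rpow_def_of_pos (by positivity),
        hc, mul_comm]
    simp only [Pi.mul_apply]
    rw [← ENNReal.ofReal_mul (by positivity), ← ENNReal.ofReal_mul (by positivity)]
    congr 1
    have hg' : Real.exp (g p) = Real.exp c * Real.exp (-(1/2) * (e.symm p ⬝ᵥ (S⁻¹ *ᵥ e.symm p)))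
        * (Real.exp (-(1/2) * (p.1 ⬝ᵥ (A⁻¹ *ᵥ p.1))))⁻¹
        * (Real.exp (-(1/2) * (p.2 ⬝ᵥ (D⁻¹ *ᵥ p.2))))⁻¹ := by
      rw [← Real.exp_neg, ← Real.exp_neg, ← Real.exp_add, ← Real.exp_add, ← Real.exp_add]
      congr 1
      simp only [g]
      ring
    rw [hg', hexpc]
    simp only [sub_zero, Fintype.card_sum, pow_add]
    rw [Real.sqrt_mul (by positivity), Real.sqrt_mul (by positivity), Real.sqrt_mul (by positivity),
      Real.sqrt_mul (by positivity), Real.sqrt_mul (by positivity)]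
    field_simp
  have hac : μ.map e ≪ Q := by rw [hPQ]; exact withDensity_absolutelyContinuous _ _
  have hll : (fun x => Real.log ((μ.map e).rnDeriv Q x).toReal) =ᵐ[μ.map e] g := by
    have h3 : (μ.map e).rnDeriv Q =ᵐ[Q] fun p => ENNReal.ofReal (Real.exp (g p)) := by
      rw [hPQ]
      exact Measure.rnDeriv_withDensity _ (by fun_prop)
    filter_upwards [hac.ae_le h3] with p hp
    rw [hp, ENNReal.toReal_ofReal (Real.exp_pos _).le, Real.log_exp]
  have q1 := (hμ.integrable_quadratic S⁻¹)
  have q2 : Integrable (fun x => (e x).1 ⬝ᵥ (A⁻¹ *ᵥ (e x).1)) μ := by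
    have := h1.integrable_quadratic A⁻¹
    rw [Measure.map_map (by fun_prop) (by fun_prop)] at this
    exact this.comp_measurable (by fun_prop)
  have q3 : Integrable (fun x => (e x).2 ⬝ᵥ (D⁻¹ *ᵥ (e x).2)) μ := by
    have := h2.integrable_quadratic D⁻¹
    rw [Measure.map_map (by fun_prop) (by fun_prop)] at this
    exact this.comp_measurable (by fun_prop)
  have i1 : ∫ x, x ⬝ᵥ (S⁻¹ *ᵥ x) ∂μ = Fintype.card α + Fintype.card β := by
    rw [hμ.integral_quadratic, nonsing_inv_mul _ hpd.det_pos.ne'.isUnit]; simp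
  have i2 : ∫ x, (e x).1 ⬝ᵥ (A⁻¹ *ᵥ (e x).1) ∂μ = Fintype.card α := by
    have := h1.integral_quadratic A⁻¹
    rw [Measure.map_map (by fun_prop) (by fun_prop), integral_map (by fun_prop)
      (measurable_quadratic _).aestronglyMeasurable, nonsing_inv_mul _ hA.det_pos.ne'.isUnit] at this
    simpa using this
  have i3 : ∫ x, (e x).2 ⬝ᵥ (D⁻¹ *ᵥ (e x).2) ∂μ = Fintype.card β := by
    have := h2.integral_quadratic D⁻¹
    rw [Measure.map_map (by fun_prop) (by fun_prop), integral_map (by fun_prop)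
      (measurable_quadratic _).aestronglyMeasurable, nonsing_inv_mul _ hD.det_pos.ne'.isUnit] at this
    simpa using this
  have hge : (fun x => g (e x)) = fun x => c - 1 / 2 * (x ⬝ᵥ (S⁻¹ *ᵥ x))
      + 1 / 2 * ((e x).1 ⬝ᵥ (A⁻¹ *ᵥ (e x).1)) + 1 / 2 * ((e x).2 ⬝ᵥ (D⁻¹ *ᵥ (e x).2)) := by
    ext x; simp [g]
  have j1 : Integrable (fun x => c - 1 / 2 * (x ⬝ᵥ (S⁻¹ *ᵥ x))) μ :=
    (integrable_const c).sub (q1.const_mul _)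
  have j2 : Integrable (fun x => c - 1 / 2 * (x ⬝ᵥ (S⁻¹ *ᵥ x))
      + 1 / 2 * ((e x).1 ⬝ᵥ (A⁻¹ *ᵥ (e x).1))) μ := j1.add (q2.const_mul _)
  have hgi : Integrable (fun x => g (e x)) μ := by
    rw [hge]; exact j2.add (q3.const_mul _)
  have hgI : ∫ x, g (e x) ∂μ = c := by
    rw [hge, integral_add j2 (q3.const_mul _), integral_add j1 (q2.const_mul _),
      integral_sub (integrable_const c) (q1.const_mul _),
      integral_const_mul (1 / 2) fun x => x ⬝ᵥ (S⁻¹ *ᵥ x),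
      integral_const_mul (1 / 2) fun x => (e x).1 ⬝ᵥ (A⁻¹ *ᵥ (e x).1),
      integral_const_mul (1 / 2) fun x => (e x).2 ⬝ᵥ (D⁻¹ *ᵥ (e x).2), i1, i2, i3]
    simp only [integral_const, probReal_univ, one_smul]
    ring
  unfold mutualInfo klDiv
  rw [← hQ, if_pos]
  · rw [integral_congr_ae hll, integral_map (by fun_prop) hgm.aestronglyMeasurable, hgI]
  · refine ⟨hac, Integrable.congr ?_ hll.symm⟩
    rw [integrable_map_measure hgm.aestronglyMeasurable (by fun_prop)]
    exact hgi

/-! ### The Gaussian channel -/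

section MatrixFacts

variable {α β : Type*} [Fintype α] [Fintype β] [DecidableEq α]

/-- The covariance of `(H Y + n, Y)` for independent `Y`, `n` with covariances `S`, `N`. -/
def channelCov {α β : Type*} [Fintype β] (H : Matrix α β ℝ) (S : Matrix β β ℝ) (N : Matrix α α ℝ) :
    Matrix (α ⊕ β) (α ⊕ β) ℝ :=
  fromBlocks (H * S * Hᵀ + N) (H * S) (S * Hᵀ) S

theorem channelCov_eq [DecidableEq β] (H : Matrix α β ℝ) (S : Matrix β β ℝ) (N : Matrix α α ℝ) :
    channelCov H S N
      = fromBlocks 1 H 0 1 * fromBlocks N 0 0 S * (fromBlocks 1 H 0 1)ᵀ := by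
  simp [channelCov, fromBlocks_multiply, fromBlocks_transpose, add_comm]

theorem det_channelCov [DecidableEq β] (H : Matrix α β ℝ) (S : Matrix β β ℝ) (N : Matrix α α ℝ) :
    (channelCov H S N).det = N.det * S.det := by
  rw [channelCov_eq, det_mul, det_mul, det_transpose, det_fromBlocks_zero₂₁,
    det_fromBlocks_zero₂₁]
  simp

/-- `n = (H Y + n) - H Y`. -/
theorem noise_eq_channelCov (H : Matrix α β ℝ) (S : Matrix β β ℝ) (N : Matrix α α ℝ) :
    fromCols (1 : Matrix α α ℝ) (-H) * channelCov H S N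
      * (fromCols (1 : Matrix α α ℝ) (-H))ᵀ = N := by
  simp [channelCov, fromCols_mul_fromBlocks, transpose_fromCols, fromCols_mul_fromRows,
    Matrix.mul_assoc]

theorem channelCov_posDef [DecidableEq β] (H : Matrix α β ℝ) {S : Matrix β β ℝ} {N : Matrix α α ℝ}
    (hS : S.PosDef) (hN : N.PosDef) : (channelCov H S N).PosDef := by
  have hps : (fromBlocks N 0 0 S).PosSemidef := by
    have := hS.isUnit.invertible
    have h := (PosDef.fromBlocks₂₂ N 0 hS).mpr (by simpa using hN.posSemidef)
    simpa using h
  have h : (channelCov H S N).PosSemidef := by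
    rw [channelCov_eq]
    simpa using hps.mul_mul_conjTranspose_same (fromBlocks 1 H 0 1)
  rw [h.posDef_iff_det_ne_zero, det_channelCov]
  exact (mul_pos hN.det_pos hS.det_pos).ne'

theorem noise_posSemidef (H : Matrix α β ℝ) {S : Matrix β β ℝ} {N : Matrix α α ℝ}
    (h : (channelCov H S N).PosSemidef) : N.PosSemidef := by
  have := h.mul_mul_conjTranspose_same (fromCols (1 : Matrix α α ℝ) (-H))
  rwa [conjTranspose_eq_transpose_of_trivial, noise_eq_channelCov] at this

theorem one_le_det_one_add {P : Matrix α α ℝ} (hP : P.PosSemidef) : 1 ≤ (1 + P).det := by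
  have hh : (1 + P).IsHermitian := isHermitian_one.add hP.isHermitian
  rw [hh.det_eq_prod_eigenvalues]
  have : ∀ i, 1 ≤ hh.eigenvalues i := by
    intro i
    have hv := hh.eigenvalues_eq i
    have hn : star (hh.eigenvectorBasis i : α → ℝ) ⬝ᵥ (hh.eigenvectorBasis i : α → ℝ) = 1 := by
      have := hh.eigenvectorBasis.orthonormal.1 i
      have h2 := real_inner_self_eq_norm_sq (hh.eigenvectorBasis i)
      rw [this, EuclideanSpace.inner_eq_star_dotProduct] at h2
      simpa using h2
    rw [hv, add_mulVec, dotProduct_add, one_mulVec, hn]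
    have := hP.dotProduct_mulVec_nonneg (hh.eigenvectorBasis i : α → ℝ)
    simpa using this
  calc (1 : ℝ) = ∏ _i : α, (1 : ℝ) := by simp
    _ ≤ _ := Finset.prod_le_prod (fun _ _ => zero_le_one) fun i _ => this i

/-- The determinant is monotone for the Loewner order: factor `B = L Lᵀ` and compare
`1 + L⁻¹ P L⁻ᵀ` with `1`. -/
theorem det_le_det_add {B P : Matrix α α ℝ} (hB : B.PosDef) (hP : P.PosSemidef) :
    B.det ≤ (B + P).det := by
  obtain ⟨L, rfl, hL⟩ := exists_eq_mul_transpose hB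
  have hu : IsUnit L.det := isUnit_iff_ne_zero.mpr hL
  have hP' := hP.mul_mul_conjTranspose_same L⁻¹
  rw [conjTranspose_eq_transpose_of_trivial] at hP'
  have h1 := one_le_det_one_add hP'
  have : L * Lᵀ + P = L * (1 + L⁻¹ * P * L⁻¹ᵀ) * Lᵀ := by
    rw [Matrix.mul_add, Matrix.add_mul, Matrix.mul_one]
    congr 1
    rw [transpose_nonsing_inv, ← Matrix.mul_assoc, ← Matrix.mul_assoc, mul_nonsing_inv _ hu,
      Matrix.one_mul, Matrix.mul_assoc, nonsing_inv_mul _ (by simpa using hu), Matrix.mul_one]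
  rw [this, det_mul, det_mul, det_mul, det_transpose]
  nlinarith [mul_self_nonneg L.det]

end MatrixFacts

/-- The mutual information of the Gaussian channel `Y ↦ H Y + n`. -/
theorem IsCenteredGaussian.mutualInfo_channel {α β : Type*} [Fintype α] [Fintype β]
    [DecidableEq α] [DecidableEq β] {H : Matrix α β ℝ} {S : Matrix β β ℝ} {N : Matrix α α ℝ}
    {μ : Measure (α ⊕ β → ℝ)} (hμ : IsCenteredGaussian μ (channelCov H S N))
    (hS : S.PosDef) (hN : N.PosDef) :
    mutualInfo (μ.map (MeasurableEquiv.sumPiEquivProdPi fun _ => ℝ))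
      = ((1 / 2 * Real.log ((H * S * Hᵀ + N).det / N.det) : ℝ) : EReal) := by
  have hHS : (H * S * Hᵀ).PosSemidef := by
    simpa using hS.posSemidef.mul_mul_conjTranspose_same H
  have h := IsCenteredGaussian.mutualInfo_eq hμ (channelCov_posDef H hS hN)
    (hN.posSemidef_add hHS) hS
  have hd := det_channelCov H S N
  unfold channelCov at hd
  rw [h, hd, mul_div_mul_right _ _ hS.det_pos.ne']

theorem IsCenteredGaussian.map_comp {ι κ : Type*} [Fintype ι] [Fintype κ] [DecidableEq ι]
    {μ : Measure (ι → ℝ)} {S : Matrix ι ι ℝ} (h : IsCenteredGaussian μ S) (f : κ → ι) :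
    IsCenteredGaussian (μ.map fun x => x ∘ f) (S.submatrix f f) := by
  convert h.map_mulVec ((1 : Matrix ι ι ℝ).submatrix f id) using 1
  · congr 1
    ext x i
    simp [mulVec, dotProduct, one_apply]
  · ext i j
    simp [mul_apply, one_apply]

/-- Smoothing the channel output by independent Gaussian noise of covariance `s I` adds `s I` to
the noise covariance, and by data processing it does not increase the mutual information. -/
theorem IsCenteredGaussian.mutualInfo_smooth_le {α β : Type*} [Fintype α] [Fintype β]
    [DecidableEq α] [DecidableEq β] {H : Matrix α β ℝ} {S : Matrix β β ℝ} {N : Matrix α α ℝ}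
    {μ : Measure (α ⊕ β → ℝ)} (hμ : IsCenteredGaussian μ (channelCov H S N))
    (hS : S.PosDef) (hN : N.PosSemidef) {s : ℝ} (hs : 0 < s) :
    ((1 / 2 * Real.log ((H * S * Hᵀ + (N + s • 1)).det / (N + s • 1).det) : ℝ) : EReal)
      ≤ mutualInfo (μ.map (MeasurableEquiv.sumPiEquivProdPi fun _ => ℝ)) := by
  set e := MeasurableEquiv.sumPiEquivProdPi (fun _ : α ⊕ β => ℝ) with he
  have hμp := hμ.isProbabilityMeasure
  have hs1 : (s • (1 : Matrix α α ℝ)).PosDef := PosDef.one.smul hs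
  have hNs : (N + s • 1).PosDef := by rw [add_comm]; exact hs1.add_posSemidef hN
  set ρ := mvGaussian 0 (s • (1 : Matrix α α ℝ)) with hρ
  have hρg : IsCenteredGaussian ρ (s • 1) := isCenteredGaussian_mvGaussian hs1
  have hρp := hρg.isProbabilityMeasure
  have hJ := hρg.map_mulVec (fromRows (1 : Matrix α α ℝ) (0 : Matrix β α ℝ))
  have hsum := hμ.conv hJ
  have hcov : channelCov H S N + fromRows (1 : Matrix α α ℝ) (0 : Matrix β α ℝ)
      * (s • (1 : Matrix α α ℝ))
      * (fromRows (1 : Matrix α α ℝ) (0 : Matrix β α ℝ))ᵀ = channelCov H S (N + s • 1) := by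
    ext (i | i) (j | j) <;>
      simp [channelCov, transpose_fromRows, add_assoc]
  rw [hcov] at hsum
  rw [← hsum.mutualInfo_channel hS hNs]
  have hem : IsProbabilityMeasure (μ.map e) := Measure.isProbabilityMeasure_map (by fun_prop)
  refine le_trans (le_of_eq ?_) (mutualInfo_noise_le (μ.map e) ρ)
  congr 1
  have hmJ := measurable_mulVec (fromRows (1 : Matrix α α ℝ) (0 : Matrix β α ℝ))
  rw [Measure.conv]
  conv_lhs => rw [← Measure.map_id (μ := μ)]
  conv_rhs => rw [← Measure.map_id (μ := ρ)]
  rw [Measure.map_prod_map _ _ (by fun_prop) hmJ, Measure.map_prod_map _ _ (by fun_prop)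
    (by fun_prop), Measure.map_map (by fun_prop) (by fun_prop), Measure.map_map (by fun_prop)
    (by fun_prop), Measure.map_map (by fun_prop) (by fun_prop)]
  congr 1
  ext z i
  · simp [he, fromRows_mulVec]
    rfl
  · simp only [he, fromRows_mulVec, Function.comp, Prod.map, zero_mulVec, id]
    exact add_zero _

/-! ### The pairwise marginal constraints -/

theorem integral_eval_map_comp {ι κ : Type*} (μ : Measure (ι → ℝ)) (f : κ → ι) (k : κ) :
    ∫ x, x k ∂(μ.map fun x => x ∘ f) = ∫ x, x (f k) ∂μ := by
  have hf : Measurable fun x : ι → ℝ => x ∘ f := measurable_pi_lambda _ fun k =>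
    measurable_pi_apply (f k)
  have hk : Measurable fun x : κ → ℝ => x k := measurable_pi_apply k
  rw [integral_map hf.aemeasurable hk.aestronglyMeasurable]
  rfl

theorem restrict₁Y_eq {d₁ d₂ dY : ℕ} :
    (restrict₁Y : ((Fin d₁ ⊕ Fin d₂) ⊕ Fin dY → ℝ) → _) = fun x => x ∘ Sum.map Sum.inl id := by
  ext x (i | i) <;> rfl

theorem restrict₂Y_eq {d₁ d₂ dY : ℕ} :
    (restrict₂Y : ((Fin d₁ ⊕ Fin d₂) ⊕ Fin dY → ℝ) → _) = fun x => x ∘ Sum.map Sum.inr id := by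
  ext x (i | i) <;> rfl

theorem channelCov_submatrix_inl {α₁ α₂ β : Type*} [Fintype β] (H₁ : Matrix α₁ β ℝ)
    (H₂ : Matrix α₂ β ℝ) (S : Matrix β β ℝ) (A : Matrix α₁ α₁ ℝ) (M : Matrix α₁ α₂ ℝ)
    (C : Matrix α₂ α₁ ℝ) (D : Matrix α₂ α₂ ℝ) :
    (channelCov (fromRows H₁ H₂) S (fromBlocks A M C D)).submatrix (Sum.map Sum.inl id)
      (Sum.map Sum.inl id) = channelCov H₁ S A := by
  ext (i | i) (j | j) <;> simp [channelCov, mul_apply]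

theorem channelCov_submatrix_inr {α₁ α₂ β : Type*} [Fintype β] (H₁ : Matrix α₁ β ℝ)
    (H₂ : Matrix α₂ β ℝ) (S : Matrix β β ℝ) (A : Matrix α₁ α₁ ℝ) (M : Matrix α₁ α₂ ℝ)
    (C : Matrix α₂ α₁ ℝ) (D : Matrix α₂ α₂ ℝ) :
    (channelCov (fromRows H₁ H₂) S (fromBlocks A M C D)).submatrix (Sum.map Sum.inr id)
      (Sum.map Sum.inr id) = channelCov H₂ S D := by
  ext (i | i) (j | j) <;> simp [channelCov, mul_apply]

/-- A symmetric matrix whose `(X₁, Y)`- and `(X₂, Y)`-blocks are the prescribed covariances comes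
from a noise cross-covariance `M`. -/
theorem exists_eq_channelCov {α₁ α₂ β : Type*} [Fintype β] [DecidableEq α₁] [DecidableEq α₂]
    {H₁ : Matrix α₁ β ℝ} {H₂ : Matrix α₂ β ℝ} {S : Matrix β β ℝ}
    {T : Matrix ((α₁ ⊕ α₂) ⊕ β) ((α₁ ⊕ α₂) ⊕ β) ℝ} (hT : Tᵀ = T) (hS : Sᵀ = S)
    (h₁ : T.submatrix (Sum.map Sum.inl id) (Sum.map Sum.inl id) = channelCov H₁ S 1)
    (h₂ : T.submatrix (Sum.map Sum.inr id) (Sum.map Sum.inr id) = channelCov H₂ S 1) :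
    ∃ M, T = channelCov (fromRows H₁ H₂) S (fromBlocks 1 M Mᵀ 1) := by
  refine ⟨Matrix.of fun i j => T (.inl (.inl i)) (.inl (.inr j)) - (H₁ * S * H₂ᵀ) i j, ?_⟩
  have e₁ := fun i j => congrFun (congrFun h₁ i) j
  have e₂ := fun i j => congrFun (congrFun h₂ i) j
  have hsymm : ∀ i j, (H₂ * S * H₁ᵀ) i j = (H₁ * S * H₂ᵀ) j i := by
    intro i j
    have : H₂ * S * H₁ᵀ = (H₁ * S * H₂ᵀ)ᵀ := by
      simp [transpose_mul, hS, Matrix.mul_assoc]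
    rw [this, transpose_apply]
  have hR : fromRows H₁ H₂ * S * (fromRows H₁ H₂)ᵀ
      = fromBlocks (H₁ * S * H₁ᵀ) (H₁ * S * H₂ᵀ) (H₂ * S * H₁ᵀ) (H₂ * S * H₂ᵀ) := by
    rw [transpose_fromRows, fromRows_mul, fromRows_mul_fromCols]
  have hc : S * (fromRows H₁ H₂)ᵀ = fromCols (S * H₁ᵀ) (S * H₂ᵀ) := by
    rw [transpose_fromRows, mul_fromCols]
  unfold channelCov
  rw [hR, hc, fromRows_mul]
  ext (⟨i | i⟩ | i) (⟨j | j⟩ | j)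
  · simpa [channelCov] using e₁ (.inl i) (.inl j)
  · simp
  · simpa [channelCov] using e₁ (.inl i) (.inr j)
  · have : T (.inl (.inr i)) (.inl (.inl j)) = T (.inl (.inl j)) (.inl (.inr i)) :=
      congrFun (congrFun hT _) _ |>.symm
    simp [this, hsymm]
  · simpa [channelCov] using e₂ (.inl i) (.inl j)
  · simpa [channelCov] using e₂ (.inl i) (.inr j)
  · simpa [channelCov] using e₁ (.inr i) (.inl j)
  · simpa [channelCov] using e₂ (.inr i) (.inl j)
  · simpa [channelCov] using e₁ (.inr i) (.inr j)

/-- Shrinking a positive semidefinite noise covariance `fromBlocks 1 M Mᵀ 1` to the positive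
definite one with cross-covariance `(1 + s)⁻¹ M` costs at most `n / 2 * log (1 + s)` compared with
adding `s I`. This holds since `fromBlocks 1 M Mᵀ 1 + s I` is `(1 + s)` times the shrunk matrix,
and `det` is monotone. -/
theorem shrink_noise {α₁ α₂ : Type*} [Fintype α₁] [Fintype α₂] [DecidableEq α₁] [DecidableEq α₂]
    {P : Matrix (α₁ ⊕ α₂) (α₁ ⊕ α₂) ℝ} (hP : P.PosSemidef) {M : Matrix α₁ α₂ ℝ}
    (hM : (fromBlocks 1 M Mᵀ 1).PosSemidef) {s : ℝ} (hs : 0 < s) :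
    (fromBlocks 1 ((1 + s)⁻¹ • M) ((1 + s)⁻¹ • M)ᵀ 1).PosDef ∧
    1 / 2 * Real.log ((P + fromBlocks 1 ((1 + s)⁻¹ • M) ((1 + s)⁻¹ • M)ᵀ 1).det
        / (fromBlocks 1 ((1 + s)⁻¹ • M) ((1 + s)⁻¹ • M)ᵀ 1).det)
      ≤ 1 / 2 * Real.log ((P + (fromBlocks 1 M Mᵀ 1 + s • 1)).det
        / (fromBlocks 1 M Mᵀ 1 + s • 1).det)
        + Fintype.card (α₁ ⊕ α₂) / 2 * Real.log (1 + s) := by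
  set N := fromBlocks 1 M Mᵀ 1 with hN
  have hs' : (0 : ℝ) < 1 + s := by linarith
  have hpd : (N + s • 1).PosDef := by
    rw [add_comm]; exact (PosDef.one.smul hs).add_posSemidef hM
  have heq : fromBlocks 1 ((1 + s)⁻¹ • M) ((1 + s)⁻¹ • M)ᵀ 1 = (1 + s)⁻¹ • (N + s • 1) := by
    have hdiag : 1 = (1 + s)⁻¹ * (1 + s) := by field_simp
    ext (i | i) (j | j) <;> simp [hN, one_apply] <;> split_ifs <;> simp [← hdiag]
  have hpd' : ((1 + s)⁻¹ • (N + s • 1)).PosDef := hpd.smul (by positivity)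
  rw [heq]
  refine ⟨hpd', ?_⟩
  set n := Fintype.card (α₁ ⊕ α₂)
  set G := N + s • 1 with hG
  have hGd := hpd.det_pos
  have hPG : (P + G).PosDef := by rw [add_comm]; exact hpd.add_posSemidef hP
  have hPGd := hPG.det_pos
  have hle : (P + (1 + s)⁻¹ • G).det ≤ (P + G).det := by
    have : P + G = (P + (1 + s)⁻¹ • G) + (s * (1 + s)⁻¹) • G := by
      have h1 : (1 + s)⁻¹ + s * (1 + s)⁻¹ = 1 := by field_simp
      rw [add_assoc, ← add_smul, h1, one_smul]
    rw [this]
    refine det_le_det_add ?_ (hpd.posSemidef.smul (by positivity))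
    rw [add_comm]; exact hpd'.add_posSemidef hP
  have hpos' : 0 < (P + (1 + s)⁻¹ • G).det := by
    refine PosDef.det_pos ?_
    rw [add_comm]; exact hpd'.add_posSemidef hP
  have hlog : Real.log ((P + (1 + s)⁻¹ • G).det / ((1 + s)⁻¹ • G).det)
      ≤ Real.log ((1 + s) ^ n * ((P + G).det / G.det)) := by
    apply Real.log_le_log (div_pos hpos' hpd'.det_pos)
    rw [det_smul]
    have : (P + (1 + s)⁻¹ • G).det / ((1 + s)⁻¹ ^ n * G.det)
        = (1 + s) ^ n * ((P + (1 + s)⁻¹ • G).det / G.det) := by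
      rw [inv_pow]; field_simp
    rw [this]
    gcongr
  rw [Real.log_mul (by positivity) (by positivity), Real.log_pow] at hlog
  linarith

/-- **Thin-PID reformulation of the synergy optimization** (Theorem 3.3):
for `Y ~ N(0, Σ_Y)` with `Σ_Y` positive definite, `X₁ = H₁ Y + n₁`, `X₂ = H₂ Y + n₂` with
whitened noises, the infimum of `I((X₁, X₂); Y)` over all jointly Gaussian laws of
`(X₁, X₂, Y)` with the prescribed pairwise Gaussian marginals equals the infimum over
cross-covariances `M` (with `fromBlocks I M Mᵀ I` positive definite) of
`(1/2) · log(det(H Σ_Y Hᵀ + Σ_{n₁n₂}(M)) / det Σ_{n₁n₂}(M))`, where `H = [H₁; H₂]`. -/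
theorem thinPID_synergy_reformulation
    {d₁ d₂ dY : ℕ} (SY : Matrix (Fin dY) (Fin dY) ℝ) (hSY : SY.PosDef)
    (H₁ : Matrix (Fin d₁) (Fin dY) ℝ) (H₂ : Matrix (Fin d₂) (Fin dY) ℝ) :
    (⨅ q ∈ {q : Measure (((Fin d₁ ⊕ Fin d₂) ⊕ Fin dY) → ℝ) |
        IsGaussianMeasure q ∧
        q.map restrict₁Y
          = mvGaussian 0 (fromBlocks (H₁ * SY * H₁ᵀ + 1) (H₁ * SY) (SY * H₁ᵀ) SY) ∧
        q.map restrict₂Y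
          = mvGaussian 0 (fromBlocks (H₂ * SY * H₂ᵀ + 1) (H₂ * SY) (SY * H₂ᵀ) SY)},
      mutualInfo (q.map (MeasurableEquiv.sumPiEquivProdPi fun _ => ℝ)))
    = ⨅ M ∈ {M : Matrix (Fin d₁) (Fin d₂) ℝ | (fromBlocks 1 M Mᵀ 1).PosDef},
        ((1/2 * Real.log
            (((fromRows H₁ H₂) * SY * (fromRows H₁ H₂)ᵀ + fromBlocks 1 M Mᵀ 1).det
              / (fromBlocks 1 M Mᵀ 1).det) : ℝ) : EReal) := by
  have hsymY : SYᵀ = SY := by simpa using hSY.isHermitian.eq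
  set H := fromRows H₁ H₂ with hH
  have hP : (H * SY * Hᵀ).PosSemidef := by
    simpa using hSY.posSemidef.mul_mul_conjTranspose_same H
  have hg₁ : IsCenteredGaussian (mvGaussian 0 (channelCov H₁ SY 1)) (channelCov H₁ SY 1) :=
    isCenteredGaussian_mvGaussian (channelCov_posDef H₁ hSY PosDef.one)
  have hg₂ : IsCenteredGaussian (mvGaussian 0 (channelCov H₂ SY 1)) (channelCov H₂ SY 1) :=
    isCenteredGaussian_mvGaussian (channelCov_posDef H₂ hSY PosDef.one)
  apply le_antisymm
  · refine le_iInf₂ fun M hM => ?_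
    have hq : IsCenteredGaussian (mvGaussian 0 (channelCov H SY (fromBlocks 1 M Mᵀ 1)))
      (channelCov H SY (fromBlocks 1 M Mᵀ 1)) :=
      isCenteredGaussian_mvGaussian (channelCov_posDef H hSY hM)
    refine (iInf₂_le (mvGaussian 0 (channelCov H SY (fromBlocks 1 M Mᵀ 1))) ?_).trans
      (hq.mutualInfo_channel hSY hM).le
    refine ⟨hq.isGaussianMeasure, ?_, ?_⟩
    · have := hq.map_comp (Sum.map Sum.inl id)
      rw [channelCov_submatrix_inl] at this
      rw [restrict₁Y_eq]
      exact this.measure_ext hg₁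
    · have := hq.map_comp (Sum.map Sum.inr id)
      rw [channelCov_submatrix_inr] at this
      rw [restrict₂Y_eq]
      exact this.measure_ext hg₂
  · refine le_iInf₂ fun q hq => ?_
    obtain ⟨hqg, hq₁, hq₂⟩ := hq
    rw [restrict₁Y_eq] at hq₁
    rw [restrict₂Y_eq] at hq₂
    change _ = mvGaussian 0 (channelCov H₁ SY 1) at hq₁
    change _ = mvGaussian 0 (channelCov H₂ SY 1) at hq₂
    -- each coordinate is a coordinate of one of the two centered marginals
    have hmean : ∀ i, ∫ x, x i ∂q = 0 := by
      have h₁ : ∀ i, ∫ x, x (Sum.map Sum.inl id i) ∂q = 0 := by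
        intro i
        rw [← integral_eval_map_comp, hq₁]
        exact hg₁.integral_eval i
      have h₂ : ∀ i, ∫ x, x (Sum.map Sum.inr id i) ∂q = 0 := by
        intro i
        rw [← integral_eval_map_comp, hq₂]
        exact hg₂.integral_eval i
      rintro ((i | i) | i)
      · exact h₁ (.inl i)
      · exact h₂ (.inl i)
      · exact h₁ (.inr i)
    have hqc := hqg.isCenteredGaussian hmean
    set T : Matrix ((Fin d₁ ⊕ Fin d₂) ⊕ Fin dY) ((Fin d₁ ⊕ Fin d₂) ⊕ Fin dY) ℝ :=
      Matrix.of fun i j => ∫ x, x i * x j ∂q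
    have hT₁ := (hqc.map_comp (Sum.map Sum.inl id)).cov_ext (hq₁ ▸ hg₁)
    have hT₂ := (hqc.map_comp (Sum.map Sum.inr id)).cov_ext (hq₂ ▸ hg₂)
    -- the pairwise marginals leave only the noise cross-covariance free; it may be singular
    obtain ⟨M, hTM⟩ := exists_eq_channelCov (by simpa using hqc.posSemidef.isHermitian.eq) hsymY
      hT₁ hT₂
    rw [← hH] at hTM
    rw [hTM] at hqc
    have hN := noise_posSemidef H hqc.posSemidef
    have hqp := hqg.1
    set I := mutualInfo (q.map (MeasurableEquiv.sumPiEquivProdPi fun _ => ℝ)) with hI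
    set R := ⨅ M ∈ {M : Matrix (Fin d₁) (Fin d₂) ℝ | (fromBlocks 1 M Mᵀ 1).PosDef},
        ((1/2 * Real.log ((H * SY * Hᵀ + fromBlocks 1 M Mᵀ 1).det
              / (fromBlocks 1 M Mᵀ 1).det) : ℝ) : EReal) with hR
    -- smooth the singular noise by `s I`, then rescale it back to identity diagonal blocks
    have key : ∀ s : ℝ, 0 < s →
        R ≤ I + ((Fintype.card (Fin d₁ ⊕ Fin d₂) / 2 * Real.log (1 + s) : ℝ) : EReal) := by
      intro s hs
      obtain ⟨hpd, hle⟩ := shrink_noise hP hN hs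
      refine (iInf₂_le ((1 + s)⁻¹ • M) hpd).trans ?_
      refine (EReal.coe_le_coe_iff.mpr hle).trans ?_
      rw [EReal.coe_add]
      gcongr
      exact hqc.mutualInfo_smooth_le hSY hN hs
    -- let `s` tend to `0`
    have hlim : Filter.Tendsto
        (fun s : ℝ => I + ((Fintype.card (Fin d₁ ⊕ Fin d₂) / 2 * Real.log (1 + s) : ℝ) : EReal))
        (nhdsWithin 0 (Set.Ioi 0)) (nhds (I + ((0 : ℝ) : EReal))) := by
      have hr : Filter.Tendsto
          (fun s : ℝ => (Fintype.card (Fin d₁ ⊕ Fin d₂) / 2 * Real.log (1 + s) : ℝ))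
          (nhdsWithin 0 (Set.Ioi 0)) (nhds 0) := by
        have hc : ContinuousAt
            (fun s : ℝ => (Fintype.card (Fin d₁ ⊕ Fin d₂) / 2 * Real.log (1 + s) : ℝ)) 0 :=
          continuousAt_const.mul ((continuousAt_const.add continuousAt_id).log (by simp))
        have := hc.tendsto.mono_left (nhdsWithin_le_nhds (s := Set.Ioi 0))
        simpa using this
      have ha := EReal.continuousAt_add (p := (I, ((0 : ℝ) : EReal)))
        (Or.inr (EReal.coe_ne_bot _)) (Or.inr (EReal.coe_ne_top _))
      exact ha.tendsto.comp (tendsto_const_nhds.prodMk_nhds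
        ((continuous_coe_real_ereal.tendsto 0).comp hr))
    have := ge_of_tendsto hlim (by
      filter_upwards [self_mem_nhdsWithin] with s hs using key s hs)
    simpa using this
end
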